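/- Let p and q be positive integers and let τ be a permutation of [p+q] such that τ(p) = p+1. Then τ ∈ S_ann-nc(p,q) if and only if #(τ) + #(τ⁻¹γ) = p+q. -/

import Mathlib

/-- The permutation induced by `f` on the subset `B`: an element `b` is sent to the first
element of the sequence `f b, f (f b), f (f (f b)), ...` that lies in `B`
(and is left fixed if no iterate ever returns to `B`). -/
noncomputable def induced {α : Type*} (f : α → α) (B : Set α) (b : α) : α := by
  classical
  exact if h : ∃ k, 0 < k ∧ f^[k] b ∈ B then f^[Nat.find h] b else b

/-- `A` is an orbit of the permutation `τ`. -/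
def IsOrbit {α : Type*} (τ : Equiv.Perm α) (A : Set α) : Prop :=
  ∃ a, A = {b | τ.SameCycle a b}

/-- The number of orbits of `τ` (fixed points count as orbits). -/
noncomputable def numOrbits {α : Type*} (τ : Equiv.Perm α) : ℕ :=
  Set.ncard {A : Set α | IsOrbit τ A}

/-- `induced f S` acts on `a, b, c` as the 3-cycle `(a, b, c)`. -/
def MapsCyc3 {α : Type*} (f : α → α) (S : Set α) (a b c : α) : Prop :=
  induced f S a = b ∧ induced f S b = c ∧ induced f S c = a

/-- `induced f S` acts on `a, b, c, d` as the 4-cycle `(a, b, c, d)`. -/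
def MapsCyc4 {α : Type*} (f : α → α) (S : Set α) (a b c d : α) : Prop :=
  induced f S a = b ∧ induced f S b = c ∧ induced f S c = d ∧ induced f S d = a

/-- `induced f S` acts on `a, b, c, d` as the product of transpositions `(a, c)(b, d)`. -/
def MapsSwap2 {α : Type*} (f : α → α) (S : Set α) (a b c d : α) : Prop :=
  induced f S a = c ∧ induced f S c = a ∧ induced f S b = d ∧ induced f S d = b

/-- `induced f S` acts on `x, y` as the transposition `(x, y)`. -/
def MapsSwap {α : Type*} (f : α → α) (S : Set α) (x y : α) : Prop :=
  induced f S x = y ∧ induced f S y = x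

/-- `σ` is standard with respect to the "forward cycle" `γ₀`, i.e. `σ∣B = γ₀∣B` for
every orbit `B` of `σ`. -/
def DiscStandardRel {n : ℕ} (γ₀ σ : Equiv.Perm (Fin n)) : Prop :=
  ∀ A : Set (Fin n), IsOrbit σ A → ∀ b ∈ A, induced (⇑σ) A b = induced (⇑γ₀) A b

/-- The orbit partition of `σ` has no crossing: there are no `a < b < c < d` with
`a, c` in one orbit and `b, d` in a different orbit. -/
def OrbitsNoCrossing {n : ℕ} (σ : Equiv.Perm (Fin n)) : Prop :=
  ¬ ∃ a b c d : Fin n, a < b ∧ b < c ∧ c < d ∧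
      σ.SameCycle a c ∧ σ.SameCycle b d ∧ ¬ σ.SameCycle a b

/-- Disc non-crossing relative to a given forward cycle `γ₀`. -/
def DiscNCRel {n : ℕ} (γ₀ σ : Equiv.Perm (Fin n)) : Prop :=
  DiscStandardRel γ₀ σ ∧ OrbitsNoCrossing σ

/-- The set `S_disc-nc(n)` of disc non-crossing permutations of `[n]`
(here `[n] = {1, …, n}` is modelled by `Fin n`, and the forward cycle
`γ₀ = (1, 2, …, n)` is `finRotate n`). -/
def DiscNC {n : ℕ} (σ : Equiv.Perm (Fin n)) : Prop :=
  DiscNCRel (finRotate n) σ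

/-- The external points `{1, …, p}` (0-indexed: values `< p`). -/
def extSet (p q : ℕ) : Set (Fin (p + q)) := {i | (i : ℕ) < p}

/-- The internal points `{p+1, …, p+q}` (0-indexed: values `≥ p`). -/
def intSet (p q : ℕ) : Set (Fin (p + q)) := {i | p ≤ (i : ℕ)}

/-- `γ_ext = (1, 2, …, p)`, the forward cycle on the external points. -/
def gammaExt (p q : ℕ) : Equiv.Perm (Fin (p + q)) :=
  ((List.finRange (p + q)).take p).formPerm

/-- `γ_int = (p+1, p+2, …, p+q)`, the forward cycle on the internal points. -/
def gammaInt (p q : ℕ) : Equiv.Perm (Fin (p + q)) :=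
  ((List.finRange (p + q)).drop p).formPerm

/-- `γ = γ_ext · γ_int`. -/
def gammaAnn (p q : ℕ) : Equiv.Perm (Fin (p + q)) := gammaExt p q * gammaInt p q

/-- `λ_{x,y}`: the permutation fixing `x` and `y` and cycling the remaining points as
`(γ_ext(x), γ_ext²(x), …, γ_ext^{p-1}(x), γ_int(y), γ_int²(y), …, γ_int^{q-1}(y))`. -/
def lamPerm (p q : ℕ) (x y : Fin (p + q)) : Equiv.Perm (Fin (p + q)) :=
  (((List.range (p - 1)).map fun k => (gammaExt p q ^ (k + 1)) x) ++
    ((List.range (q - 1)).map fun k => (gammaInt p q ^ (k + 1)) y)).formPerm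

/-- `τ` is standard in `(p,q)`-annular sense. -/
def AnnStandard (p q : ℕ) (τ : Equiv.Perm (Fin (p + q))) : Prop :=
  (∀ A : Set (Fin (p + q)), IsOrbit τ A →
    (∀ b ∈ A ∩ extSet p q,
        induced (⇑τ) (A ∩ extSet p q) b = induced (⇑(gammaExt p q)) (A ∩ extSet p q) b) ∧
    (∀ b ∈ A ∩ intSet p q,
        induced (⇑τ) (A ∩ intSet p q) b = induced (⇑(gammaInt p q)) (A ∩ intSet p q) b)) ∧
  (∀ A : Set (Fin (p + q)), IsOrbit τ A →
    (A ∩ extSet p q).Nonempty → (A ∩ intSet p q).Nonempty →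
    (∃! a, a ∈ A ∩ extSet p q ∧ τ a ∈ intSet p q) ∧
    (∃! a, a ∈ A ∩ intSet p q ∧ τ a ∈ extSet p q))

/-- The annular crossing pattern (AC-1). -/
def AC1 (p q : ℕ) (τ : Equiv.Perm (Fin (p + q))) : Prop :=
  ∃ a b c d : Fin (p + q), List.Pairwise (· ≠ ·) [a, b, c, d] ∧
    MapsCyc4 (⇑(gammaAnn p q)) {a, b, c, d} a b c d ∧
    MapsSwap2 (⇑τ) {a, b, c, d} a b c d

/-- The annular crossing pattern (AC-2). -/
def AC2 (p q : ℕ) (τ : Equiv.Perm (Fin (p + q))) : Prop :=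
  ∃ a b c x y : Fin (p + q), List.Pairwise (· ≠ ·) [a, b, c, x, y] ∧
    x ∈ extSet p q ∧ y ∈ intSet p q ∧
    MapsCyc3 (⇑(lamPerm p q x y)) {a, b, c} a b c ∧
    MapsCyc3 (⇑τ) {a, b, c, x, y} a c b ∧
    MapsSwap (⇑τ) {a, b, c, x, y} x y

/-- The annular crossing pattern (AC-3). -/
def AC3 (p q : ℕ) (τ : Equiv.Perm (Fin (p + q))) : Prop :=
  ∃ a b c d x y : Fin (p + q), List.Pairwise (· ≠ ·) [a, b, c, d, x, y] ∧
    x ∈ extSet p q ∧ y ∈ intSet p q ∧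
    MapsCyc4 (⇑(lamPerm p q x y)) {a, b, c, d} a b c d ∧
    MapsSwap2 (⇑τ) {a, b, c, d, x, y} a b c d ∧
    MapsSwap (⇑τ) {a, b, c, d, x, y} x y

/-- The set `S_ann-nc(p,q)` of `(p,q)`-annular non-crossing permutations. -/
def AnnNC (p q : ℕ) (τ : Equiv.Perm (Fin (p + q))) : Prop :=
  AnnStandard p q τ ∧ ¬ AC1 p q τ ∧ ¬ AC2 p q τ ∧ ¬ AC3 p q τ

/-- A `(p,q)`-connecting set: meets both the external and internal points. -/
def ConnectingBlock (p q : ℕ) (B : Set (Fin (p + q))) : Prop :=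
  (B ∩ extSet p q).Nonempty ∧ (B ∩ intSet p q).Nonempty

/-- `τ` is `(p,q)`-connected: it has a `(p,q)`-connecting orbit. -/
def AnnConnected (p q : ℕ) (τ : Equiv.Perm (Fin (p + q))) : Prop :=
  ∃ A : Set (Fin (p + q)), IsOrbit τ A ∧ ConnectingBlock p q A

/-- A family of blocks has no crossing: no `a < b < c < d` with `a, c` in one block and
`b, d` in a different block. -/
def NoCrossing {n : ℕ} (ρ : Set (Set (Fin n))) : Prop :=
  ¬ ∃ (a b c d : Fin n) (B C : Set (Fin n)), B ∈ ρ ∧ C ∈ ρ ∧ B ≠ C ∧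
      a < b ∧ b < c ∧ c < d ∧ a ∈ B ∧ c ∈ B ∧ b ∈ C ∧ d ∈ C

/-!
Write `γ₀ = finRotate n` and `κ = τ⁻¹ * γ₀`. A function constant along the orbits of both `τ` and
`κ` is constant, so `#τ + #κ = n + 1` says that every function on `Fin n` is the sum of a
`τ`-invariant and a `κ`-invariant one. For the indicator of a single point `m` such a decomposition
exists exactly when the arc from `τ m` up to `m` is a union of orbits of `τ`, and this holds for
every `m` if and only if `τ` is disc non-crossing.

Multiplying `γ` by the transposition `(p, p + q)` merges its two cycles into `γ₀`. Since
`τ p = p + 1`, the permutation `τ⁻¹ * γ` sends `p + q` to `p`, so the transposition splits `p` off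
its orbit and the orbit count goes up by one. It remains to see that `τ` is annular non-crossing if
and only if it is disc non-crossing. An orbit through `x` and `y` acts as a chord that cuts the
annulus open, and away from that orbit the order of `λ_{x,y}` can be compared with the order of
`γ₀`. For the chord from `p` to `p + 1`, which has no point strictly between its ends, the two
orders agree.
-/

attribute [local instance] LinearOrder.toCircularOrder

section CyclicOrder

variable {β : Type*} [LinearOrder β] {a b c d s : β}

/-- The closed arc of a linear order, closed up to a circle, that runs upwards from `c` to `b`,
through the top and the bottom of the order when `b < c`. Unlike `Set.cIcc`, it is a single point
when `c = b`. -/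
def cyclicIcc (c b : β) : Set β :=
  {s | c ≤ s ∧ s ≤ b ∨ b < c ∧ (s ≤ b ∨ c ≤ s)}

/-- Four distinct points are met in the cyclic order `a, b, c, d`; equivalently, the chord from
`a` to `c` separates `b` from `d`. -/
def sbtw₄ (a b c d : β) : Prop :=
  sbtw a b c ∧ sbtw c d a

theorem mem_cyclicIcc : s ∈ cyclicIcc c b ↔ c ≤ s ∧ s ≤ b ∨ b < c ∧ (s ≤ b ∨ c ≤ s) :=
  Iff.rfl

theorem sbtw_iff_lt : sbtw a b c ↔ a < b ∧ b < c ∨ b < c ∧ c < a ∨ c < a ∧ a < b :=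
  Iff.rfl

theorem sbtw₄_iff_lt : sbtw₄ a b c d ↔ a < b ∧ b < c ∧ c < d ∨ b < c ∧ c < d ∧ d < a ∨
    c < d ∧ d < a ∧ a < b ∨ d < a ∧ a < b ∧ b < c := by
  simp only [sbtw₄, sbtw_iff_lt]
  grind

theorem mem_cyclicIcc_trans (hs : s ∈ cyclicIcc c b) (hs' : s ∈ cyclicIcc d c) (hsc : s ≠ c) :
    s ∈ cyclicIcc d b := by
  simp only [mem_cyclicIcc] at hs hs' ⊢
  grind

theorem eq_of_mem_cyclicIcc (hd : d ∈ cyclicIcc c b) (hc : c ∈ cyclicIcc d b) : c = d := by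
  simp only [mem_cyclicIcc] at hc hd
  grind

theorem sbtw_of_mem_cyclicIcc (hs : s ∈ cyclicIcc c b) (hsc : s ≠ c) (hsb : s ≠ b) :
    sbtw c s b := by
  simp only [mem_cyclicIcc, sbtw_iff_lt] at hs ⊢
  grind

theorem sbtw₄_of_mem_cyclicIcc (hs : s ∈ cyclicIcc c b) (hsc : s ≠ c) (hsb : s ≠ b)
    (ha : a ∉ cyclicIcc c b) : sbtw₄ c s b a := by
  simp only [mem_cyclicIcc, sbtw₄_iff_lt] at hs ha ⊢
  grind

theorem pairwise_ne_of_sbtw₄ {α : Type*} {pos : α → β} {a b c d : α}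
    (h : sbtw₄ (pos a) (pos b) (pos c) (pos d)) : [a, b, c, d].Pairwise (· ≠ ·) := by
  rw [sbtw₄_iff_lt] at h
  simp only [List.pairwise_cons, List.mem_cons]
  grind

end CyclicOrder

section Induced

variable {α β : Type*} [LinearOrder β] {pos : α → β} {f g : Equiv.Perm α} {S T U P : Set α}
  {a b c d x y : α}

/-- The permutation `f` runs upwards through the points of `T`, ordered by `pos`, and wraps round
from the last one to the first: no point of `T` lies strictly between `b` and `f b`. -/
structure RotatesOn (f : Equiv.Perm α) (pos : α → β) (T : Set α) : Prop where
  mapsTo : Set.MapsTo f T T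
  injOn : Set.InjOn pos T
  mem_arc : ∀ b ∈ T, ∀ s ∈ T, pos s ∈ cyclicIcc (pos (f b)) (pos b)

theorem RotatesOn.mem_arc_iterate (h : RotatesOn f pos T) (hb : b ∈ T) (hx : x ∈ S ∩ T)
    (k : ℕ) (hk : ∀ j, 0 < j → j < k + 1 → f^[j] b ∉ S) :
    pos x ∈ cyclicIcc (pos (f^[k + 1] b)) (pos b) := by
  induction k with
  | zero => exact h.mem_arc b hb x hx.2
  | succ k ih =>
    have hT : f^[k + 1] b ∈ T := h.mapsTo.iterate (k + 1) hb
    have hne : pos x ≠ pos (f^[k + 1] b) := fun hpos ↦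
      hk (k + 1) k.succ_pos (Nat.lt_succ_self _) (h.injOn hx.2 hT hpos ▸ hx.1)
    rw [Function.iterate_succ_apply']
    exact mem_cyclicIcc_trans (ih fun j hj hjk ↦ hk j hj (hjk.trans (Nat.lt_succ_self _)))
      (h.mem_arc _ hT x hx.2) hne

theorem RotatesOn.sbtw_apply (h : RotatesOn f pos T) (ha : a ∈ T) (hb : b ∈ T) (hba : b ≠ a)
    (hbf : b ≠ f a) : sbtw (pos a) (pos (f a)) (pos b) :=
  (sbtw_of_mem_cyclicIcc (h.mem_arc a ha b hb) (h.injOn.ne hb (h.mapsTo ha) hbf)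
    (h.injOn.ne hb ha hba)).cyclic_right

theorem RotatesOn.congr (h : RotatesOn f pos T) (hfg : Set.EqOn g f T) : RotatesOn g pos T where
  mapsTo := hfg.mapsTo_iff.2 h.mapsTo
  injOn := h.injOn
  mem_arc b hb := hfg hb ▸ h.mem_arc b hb

theorem rotatesOn_formPerm [DecidableEq α] {l : List α} (hl : l.Pairwise (pos · < pos ·))
    (hT : ∀ v, v ∈ l ↔ v ∈ T) : RotatesOn l.formPerm pos T := by
  obtain rfl : {v | v ∈ l} = T := Set.ext hT
  have hmono : StrictMono fun i : Fin l.length ↦ pos l[i] :=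
    fun i j hij ↦ List.pairwise_iff_getElem.1 hl i j i.2 j.2 hij
  have hnodup : l.Nodup := hl.imp fun h ↦ ne_of_apply_ne pos h.ne
  refine ⟨fun v hv ↦ List.formPerm_apply_mem_of_mem hv, fun u hu v hv huv ↦ ?_,
    fun b hb s hs ↦ ?_⟩
  · obtain ⟨i, hi, rfl⟩ := List.getElem_of_mem hu
    obtain ⟨j, hj, rfl⟩ := List.getElem_of_mem hv
    have hij : (⟨i, hi⟩ : Fin l.length) = ⟨j, hj⟩ := hmono.injective huv
    simp_all
  · obtain ⟨i, hi, rfl⟩ := List.getElem_of_mem hb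
    obtain ⟨j, hj, rfl⟩ := List.getElem_of_mem hs
    have hle (r t : ℕ) (hr : r < l.length) (ht : t < l.length) : pos l[r] ≤ pos l[t] ↔ r ≤ t :=
      hmono.le_iff_le (a := ⟨r, hr⟩) (b := ⟨t, ht⟩)
    rw [List.formPerm_apply_getElem _ hnodup, mem_cyclicIcc, ← not_le, hle, hle, hle]
    rcases (Nat.succ_le_of_lt hi).eq_or_lt with hlast | hlt
    · simp only [Nat.succ_eq_add_one] at hlast
      simp only [hlast, Nat.mod_self]
      omega
    · rw [Nat.mod_eq_of_lt hlt]
      omega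

theorem mapsTo_setOf_sameCycle (f : Equiv.Perm α) (a : α) :
    Set.MapsTo f {b | f.SameCycle a b} {b | f.SameCycle a b} :=
  fun _ h ↦ h.apply_right

theorem mapsSwap2_iff : MapsSwap2 f S a b c d ↔ MapsSwap f S a c ∧ MapsSwap f S b d := by
  simp only [MapsSwap2, MapsSwap, and_assoc]

theorem induced_of_apply_mem (hfb : f b ∈ S) : induced f S b = f b := by
  classical
  have hret : ∃ k, 0 < k ∧ f^[k] b ∈ S := ⟨1, one_pos, hfb⟩
  have hfind : Nat.find hret = 1 :=
    (Nat.find_eq_iff hret).2 ⟨⟨one_pos, hfb⟩, fun k hk hk' ↦ by omega⟩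
  rw [induced, dif_pos hret, hfind, Function.iterate_one]

variable [Finite α]

theorem mem_of_mapsTo_of_sameCycle (hT : Set.MapsTo f T T) (ha : a ∈ T) (h : f.SameCycle a b) :
    b ∈ T := by
  obtain ⟨k, rfl⟩ := h.exists_nat_pow_eq
  rw [← Equiv.Perm.iterate_eq_pow]
  exact hT.iterate k ha

theorem exists_exit_of_sameCycle (h : f.SameCycle a c) (ha : a ∈ P) (hc : c ∉ P) :
    ∃ m, f.SameCycle a m ∧ m ∈ P ∧ f m ∉ P := by
  by_contra! hP
  have hT : Set.MapsTo f {m | f.SameCycle a m ∧ m ∈ P} {m | f.SameCycle a m ∧ m ∈ P} :=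
    fun m hm ↦ ⟨hm.1.apply_right, hP m hm.1 hm.2⟩
  exact hc (mem_of_mapsTo_of_sameCycle hT ⟨.rfl, ha⟩ h).2

theorem exists_rotatesOn_sameCycle (f : Equiv.Perm α) (a : α) :
    ∃ pos : α → ℕ, RotatesOn f pos {b | f.SameCycle a b} := by
  set pos : α → ℕ := fun v ↦ sInf {k | f^[k] a = v}
  have hpos_le (k : ℕ) : pos (f^[k] a) ≤ k := Nat.sInf_le rfl
  have hiter : ∀ v ∈ {b | f.SameCycle a b}, f^[pos v] a = v := fun v hv ↦
    Nat.sInf_mem (s := {k | f^[k] a = v}) <| by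
      obtain ⟨k, hk⟩ := Equiv.Perm.SameCycle.exists_nat_pow_eq hv
      exact ⟨k, by rwa [Set.mem_ofPred_eq, Equiv.Perm.iterate_eq_pow]⟩
  refine ⟨pos, mapsTo_setOf_sameCycle f a, fun u hu v hv huv ↦ ?_, fun b hb s hs ↦ ?_⟩
  · rw [← hiter u hu, huv, hiter v hv]
  have hfb : f^[pos b + 1] a = f b := by rw [Function.iterate_succ_apply', hiter b hb]
  rcases (hfb ▸ hpos_le (pos b + 1) : pos (f b) ≤ pos b + 1).eq_or_lt with hsucc | hlt
  · rw [mem_cyclicIcc, hsucc]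
    omega
  · have hzero : pos (f b) = 0 := by
      by_contra hne
      obtain ⟨k, hk⟩ := Nat.exists_eq_succ_of_ne_zero hne
      have hkb : f^[k] a = b := f.injective <| by
        rw [← Function.iterate_succ_apply' f, ← hk, hiter (f b) (mapsTo_setOf_sameCycle f a hb)]
      have := hkb ▸ hpos_le k
      omega
    have hperiod : Function.IsPeriodicPt f (pos b + 1) a := by
      rw [Function.IsPeriodicPt, Function.IsFixedPt, hfb,
        ← hiter (f b) (mapsTo_setOf_sameCycle f a hb), hzero, Function.iterate_zero_apply]
    have hs_le : pos s ≤ pos s % (pos b + 1) := by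
      conv_lhs => rw [← hiter s hs, ← hperiod.iterate_mod_apply]
      exact hpos_le _
    have hmod_lt : pos s % (pos b + 1) < pos b + 1 := Nat.mod_lt _ (pos b).succ_pos
    rw [mem_cyclicIcc]
    omega

theorem exists_induced_eq_iterate (f : Equiv.Perm α) (hb : b ∈ S) :
    ∃ k, induced f S b = f^[k + 1] b ∧ f^[k + 1] b ∈ S ∧
      ∀ j, 0 < j → j < k + 1 → f^[j] b ∉ S := by
  classical
  have hret : ∃ k, 0 < k ∧ f^[k] b ∈ S :=
    ⟨orderOf f, orderOf_pos f, by simpa [Equiv.Perm.iterate_eq_pow, pow_orderOf_eq_one] using hb⟩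
  obtain ⟨k, hk⟩ := Nat.exists_eq_succ_of_ne_zero (Nat.find_spec hret).1.ne'
  refine ⟨k, ?_⟩
  rw [← Nat.succ_eq_add_one, ← hk, induced, dif_pos hret]
  exact ⟨rfl, (Nat.find_spec hret).2, fun j hj hjk hjS ↦ Nat.find_min hret hjk ⟨hj, hjS⟩⟩

theorem RotatesOn.induced_eq_iff (h : RotatesOn f pos T) (hb : b ∈ S ∩ T) :
    induced f S b = c ↔ c ∈ S ∩ T ∧ ∀ s ∈ S ∩ T, pos s ∈ cyclicIcc (pos c) (pos b) := by
  obtain ⟨k, heq, hkS, hmin⟩ := exists_induced_eq_iterate f hb.1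
  have hmem : f^[k + 1] b ∈ S ∩ T := ⟨hkS, h.mapsTo.iterate _ hb.2⟩
  have harc : ∀ s ∈ S ∩ T, pos s ∈ cyclicIcc (pos (f^[k + 1] b)) (pos b) :=
    fun s hs ↦ h.mem_arc_iterate hb.2 hs k hmin
  rw [heq]
  refine ⟨by rintro rfl; exact ⟨hmem, harc⟩, fun ⟨hc, hcarc⟩ ↦ ?_⟩
  exact h.injOn hmem.2 hc.2 (eq_of_mem_cyclicIcc (harc c hc) (hcarc _ hmem))

theorem RotatesOn.induced_eq_induced (hf : RotatesOn f pos T) (hg : RotatesOn g pos U)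
    (hST : S ⊆ T) (hSU : S ⊆ U) (hb : b ∈ S) : induced f S b = induced g S b := by
  rw [hf.induced_eq_iff ⟨hb, hST hb⟩, Set.inter_eq_left.2 hST]
  simpa only [Set.inter_eq_left.2 hSU] using (hg.induced_eq_iff ⟨hb, hSU hb⟩).1 rfl

theorem rotatesOn_iff_induced_eq (hf : Set.MapsTo f T T) (hg : RotatesOn g pos U)
    (hTU : T ⊆ U) : RotatesOn f pos T ↔ ∀ b ∈ T, induced f T b = induced g T b := by
  refine ⟨fun h b hb ↦ h.induced_eq_induced hg subset_rfl hTU hb, fun h ↦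
    ⟨hf, hg.injOn.mono hTU, fun b hb s hs ↦ ?_⟩⟩
  have hfb := induced_of_apply_mem (hf hb)
  exact ((hg.induced_eq_iff ⟨hb, hTU hb⟩).1 ((h b hb).symm.trans hfb)).2 s ⟨hs, hTU hs⟩

theorem RotatesOn.mapsCyc3_iff (h : RotatesOn f pos T) (hS : S ∩ T = {a, b, c})
    (hab : a ≠ b) (hbc : b ≠ c) (hca : c ≠ a) :
    MapsCyc3 f S a b c ↔ sbtw (pos a) (pos b) (pos c) := by
  have hmem (v : α) (hv : v ∈ ({a, b, c} : Set α)) : v ∈ S ∩ T := hS ▸ hv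
  have ha := hmem a (by simp)
  have hb := hmem b (by simp)
  have hc := hmem c (by simp)
  have hab := h.injOn.ne ha.2 hb.2 hab
  have hbc := h.injOn.ne hb.2 hc.2 hbc
  have hca := h.injOn.ne hc.2 ha.2 hca
  rw [MapsCyc3, h.induced_eq_iff ha, h.induced_eq_iff hb, h.induced_eq_iff hc]
  simp only [hS, Set.mem_insert_iff, Set.mem_singleton_iff, forall_eq_or_imp,
    forall_eq, mem_cyclicIcc, sbtw_iff_lt]
  grind

theorem RotatesOn.mapsCyc4_iff (h : RotatesOn f pos T) (hS : S ∩ T = {a, b, c, d})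
    (hne : [a, b, c, d].Pairwise (· ≠ ·)) :
    MapsCyc4 f S a b c d ↔ sbtw₄ (pos a) (pos b) (pos c) (pos d) := by
  have hmem (v : α) (hv : v ∈ ({a, b, c, d} : Set α)) : v ∈ S ∩ T := hS ▸ hv
  have ha := hmem a (by simp)
  have hb := hmem b (by simp)
  have hc := hmem c (by simp)
  have hd := hmem d (by simp)
  have hpos : [pos a, pos b, pos c, pos d].Pairwise (· ≠ ·) := by
    simp only [List.pairwise_cons, List.mem_cons, forall_eq_or_imp] at hne ⊢
    grind [h.injOn.eq_iff]
  rw [MapsCyc4, h.induced_eq_iff ha, h.induced_eq_iff hb, h.induced_eq_iff hc, h.induced_eq_iff hd]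
  simp only [hS, Set.mem_insert_iff, Set.mem_singleton_iff, forall_eq_or_imp,
    forall_eq, mem_cyclicIcc, sbtw₄_iff_lt]
  grind

theorem RotatesOn.subset_of_mapsCyc4 (h : RotatesOn f pos T) (ha : a ∈ T)
    (hcyc : MapsCyc4 f {a, b, c, d} a b c d) : {a, b, c, d} ⊆ T := by
  have hmem {u v : α} (hu : u ∈ ({a, b, c, d} : Set α) ∩ T) (huv : induced f {a, b, c, d} u = v) :
      v ∈ ({a, b, c, d} : Set α) ∩ T := ((h.induced_eq_iff hu).1 huv).1
  have hb := hmem ⟨by simp, ha⟩ hcyc.1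
  have hc := hmem hb hcyc.2.1
  have hd := hmem hc hcyc.2.2.1
  simp [Set.insert_subset_iff, ha, hb.2, hc.2, hd.2]

theorem mapsSwap_iff (hx : x ∈ S) :
    MapsSwap f S x y ↔ y ∈ S ∧ f.SameCycle x y ∧ ∀ s ∈ S, f.SameCycle x s → s = x ∨ s = y := by
  obtain ⟨pos, hpos⟩ := exists_rotatesOn_sameCycle f x
  have hxT : x ∈ S ∩ {b | f.SameCycle x b} := ⟨hx, .rfl⟩
  constructor
  · rintro ⟨hxy, hyx⟩
    obtain ⟨hyT, hx_arc⟩ := (hpos.induced_eq_iff hxT).1 hxy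
    obtain ⟨-, hy_arc⟩ := (hpos.induced_eq_iff hyT).1 hyx
    refine ⟨hyT.1, hyT.2, fun s hsS hs ↦ ?_⟩
    have hs_pos : pos s = pos x ∨ pos s = pos y := by
      have := hx_arc s ⟨hsS, hs⟩
      have := hy_arc s ⟨hsS, hs⟩
      simp only [mem_cyclicIcc] at *
      omega
    exact hs_pos.imp (hpos.injOn hs hxT.2) (hpos.injOn hs hyT.2)
  · rintro ⟨hyS, hxy, hsub⟩
    have hS : S ∩ {b | f.SameCycle x b} = {x, y} :=
      (Set.pair_subset hxT ⟨hyS, hxy⟩).antisymm' fun s hs ↦ hsub s hs.1 hs.2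
    have hyT : y ∈ S ∩ {b | f.SameCycle x b} := ⟨hyS, hxy⟩
    rw [MapsSwap, hpos.induced_eq_iff hxT, hpos.induced_eq_iff hyT]
    simp only [hS, Set.mem_insert_iff, Set.mem_singleton_iff, forall_eq_or_imp,
      forall_eq, mem_cyclicIcc]
    grind

end Induced

section OrbitCount

variable {α : Type*} {f : α → ℚ}

/-- The functions that are constant along the orbits of `τ`; their dimension counts the orbits. -/
def invariantFunctions (τ : Equiv.Perm α) : Submodule ℚ (α → ℚ) :=
  LinearMap.eqLocus (LinearMap.funLeft ℚ ℚ τ) LinearMap.id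

theorem mem_invariantFunctions {τ : Equiv.Perm α} :
    f ∈ invariantFunctions τ ↔ ∀ x, f (τ x) = f x :=
  funext_iff

theorem mem_invariantFunctions_mul_swap [DecidableEq α] {κ : Equiv.Perm α} {e l : α}
    (hκ : κ l = e) :
    f ∈ invariantFunctions κ ↔ f ∈ invariantFunctions (κ * Equiv.swap e l) ∧ f e = f l := by
  have hswap (h : f e = f l) (x : α) : f (Equiv.swap e l x) = f x := by
    rw [Equiv.swap_apply_def]
    split_ifs <;> simp_all only
  simp only [mem_invariantFunctions, Equiv.Perm.mul_apply]
  constructor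
  · intro hf
    have hel : f e = f l := hκ ▸ hf l
    exact ⟨fun x ↦ (hf _).trans (hswap hel x), hel⟩
  · rintro ⟨hf, hel⟩ x
    simpa only [Equiv.swap_apply_self, hswap hel] using hf (Equiv.swap e l x)

variable [Finite α]

theorem finrank_invariantFunctions (τ : Equiv.Perm α) :
    Module.finrank ℚ (invariantFunctions τ) = numOrbits τ := by
  have hconst {f : α → ℚ} (hf : f ∈ invariantFunctions τ) {a b : α} (h : τ.SameCycle a b) :
      f a = f b :=
    (mem_of_mapsTo_of_sameCycle (T := {x | f a = f x})
      (fun x hx ↦ hx.trans (mem_invariantFunctions.1 hf x).symm) rfl h)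
  let descend : invariantFunctions τ ≃ₗ[ℚ] (Quotient (Equiv.Perm.SameCycle.setoid τ) → ℚ) :=
    { toFun := fun f ↦ Quotient.lift f.1 fun _ _ h ↦ hconst f.2 h
      map_add' := fun f g ↦ funext <| Quotient.ind fun _ ↦ rfl
      map_smul' := fun r f ↦ funext <| Quotient.ind fun _ ↦ rfl
      invFun := fun g ↦ ⟨fun x ↦ g ⟦x⟧, mem_invariantFunctions.2 fun x ↦
        congrArg g (Quotient.sound (Equiv.Perm.sameCycle_apply_left.2 .rfl))⟩
      left_inv := fun f ↦ rfl
      right_inv := fun g ↦ funext <| Quotient.ind fun _ ↦ rfl }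
  have horbits : {A | IsOrbit τ A} = (Equiv.Perm.SameCycle.setoid τ).classes := by
    ext A
    exact exists_congr fun a ↦ by
      rw [show {b | τ.SameCycle a b} = {b | τ.SameCycle b a} from
        Set.ext fun b ↦ Equiv.Perm.sameCycle_comm]
      rfl
  have := Fintype.ofFinite (Quotient (Equiv.Perm.SameCycle.setoid τ))
  rw [descend.finrank_eq, Module.finrank_fintype_fun_eq_card, ← Nat.card_eq_fintype_card,
    Nat.card_congr (Setoid.quotientEquivClasses _), Nat.card_coe_set_eq, numOrbits, horbits]

theorem numOrbits_mul_swap [DecidableEq α] {κ : Equiv.Perm α} {e l : α} (hκ : κ l = e)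
    (hel : e ≠ l) : numOrbits (κ * Equiv.swap e l) = numOrbits κ + 1 := by
  set σ := κ * Equiv.swap e l with hσ
  let φ : Module.Dual ℚ (invariantFunctions σ) :=
    (LinearMap.proj (R := ℚ) (φ := fun _ ↦ ℚ) e - LinearMap.proj l) ∘ₗ
      (invariantFunctions σ).subtype
  have hσe : σ e = e := by rw [hσ, Equiv.Perm.mul_apply, Equiv.swap_apply_left, hκ]
  have hsingle : Pi.single e 1 ∈ invariantFunctions σ := mem_invariantFunctions.2 fun x ↦ by
    have hx : σ x = e ↔ x = e := ⟨fun h ↦ σ.injective (h.trans hσe.symm), fun h ↦ h ▸ hσe⟩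
    simp only [Pi.single_apply, hx]
  have hφ : φ ≠ 0 := fun h ↦ by
    simpa [φ, hel.symm] using LinearMap.congr_fun h ⟨Pi.single e 1, hsingle⟩
  have hker : LinearMap.ker φ = (invariantFunctions κ).comap (invariantFunctions σ).subtype := by
    ext f
    simp [φ, sub_eq_zero, mem_invariantFunctions_mul_swap hκ, ← hσ]
  have hle : invariantFunctions κ ≤ invariantFunctions σ :=
    fun f hf ↦ ((mem_invariantFunctions_mul_swap hκ).1 hf).1
  rw [← finrank_invariantFunctions, ← finrank_invariantFunctions,
    ← Module.Dual.finrank_ker_add_one_of_ne_zero hφ, hker,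
    (Submodule.comapSubtypeEquivOfLe hle).finrank_eq]

end OrbitCount

section Genus

variable {n : ℕ} {τ : Equiv.Perm (Fin n)} {f : Fin n → ℚ}

theorem val_finRotate (x : Fin n) :
    (finRotate n x : ℕ) = if (x : ℕ) + 1 = n then 0 else (x : ℕ) + 1 := by
  cases n with
  | zero => exact x.elim0
  | succ n => simp only [coe_finRotate, Fin.ext_iff, Fin.val_last, add_left_inj]

theorem eq_of_mem_invariantFunctions_finRotate (hf : f ∈ invariantFunctions (finRotate n))
    (x y : Fin n) : f x = f y := by
  have hzero : ∀ k (hk : k < n), f ⟨k, hk⟩ = f ⟨0, by omega⟩ := by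
    intro k
    induction k with
    | zero => exact fun _ ↦ rfl
    | succ k ih =>
      intro hk
      have hstep : finRotate n ⟨k, by omega⟩ = ⟨k + 1, hk⟩ := Fin.ext <| by
        rw [val_finRotate, if_neg hk.ne]
      rw [← ih (by omega), ← hstep, mem_invariantFunctions.1 hf]
  rw [hzero x x.2, hzero y y.2]

/-- The indicator function of the points of `Fin n` on the closed arc from `c` up to `m`. -/
noncomputable def arcIndicator (c m : Fin n) : Fin n → ℚ :=
  Set.indicator {x | (x : ℕ) ∈ cyclicIcc (c : ℕ) m} 1

theorem arcIndicator_finRotate_sub (c m x : Fin n) :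
    arcIndicator c m (finRotate n x) - arcIndicator c m x =
      Pi.single (M := fun _ ↦ ℚ) c 1 (finRotate n x) - Pi.single (M := fun _ ↦ ℚ) m 1 x := by
  classical
  simp only [arcIndicator, Set.indicator_apply, Set.mem_ofPred_eq, mem_cyclicIcc, Pi.one_apply,
    Pi.single_apply, Fin.ext_iff, val_finRotate]
  split_ifs <;> first | (exfalso; omega) | norm_num

theorem single_mem_sup_iff (τ : Equiv.Perm (Fin n)) (m : Fin n) :
    Pi.single m 1 ∈ invariantFunctions τ ⊔ invariantFunctions (τ⁻¹ * finRotate n) ↔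
      arcIndicator (τ m) m ∈ invariantFunctions τ := by
  set κ := τ⁻¹ * finRotate n with hκ
  have hτκ (x : Fin n) : τ (κ x) = finRotate n x := by simp [hκ]
  have hsingle (x : Fin n) : Pi.single (M := fun _ ↦ ℚ) m 1 (κ x) =
      Pi.single (M := fun _ ↦ ℚ) (τ m) 1 (finRotate n x) := by
    simp only [← hτκ, Pi.single_apply, τ.apply_eq_iff_eq]
  rw [Submodule.mem_sup]
  constructor
  · rintro ⟨g, hg, h, hh, hgh⟩
    have hgh' (x : Fin n) : g x + h x = Pi.single (M := fun _ ↦ ℚ) m 1 x := congrFun hgh x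
    have hconst : g - arcIndicator (τ m) m ∈ invariantFunctions (finRotate n) :=
      mem_invariantFunctions.2 fun x ↦ by
        have hgκ : g (finRotate n x) = g (κ x) := hτκ x ▸ mem_invariantFunctions.1 hg (κ x)
        simp only [Pi.sub_apply]
        linarith [arcIndicator_finRotate_sub (τ m) m x, hsingle x, hgh' x, hgh' (κ x),
          mem_invariantFunctions.1 hh x]
    refine mem_invariantFunctions.2 fun x ↦ ?_
    have hx := eq_of_mem_invariantFunctions_finRotate hconst (τ x) x
    simp only [Pi.sub_apply] at hx
    linarith [mem_invariantFunctions.1 hg x]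
  · intro hg
    refine ⟨_, hg, Pi.single m 1 - arcIndicator (τ m) m, mem_invariantFunctions.2 fun x ↦ ?_,
      add_sub_cancel _ _⟩
    have hgκ := hτκ x ▸ mem_invariantFunctions.1 hg (κ x)
    simp only [Pi.sub_apply]
    linarith [arcIndicator_finRotate_sub (τ m) m x, hsingle x]

theorem finrank_inf_invariantFunctions (hn : 0 < n) (τ : Equiv.Perm (Fin n)) :
    Module.finrank ℚ
      ↥(invariantFunctions τ ⊓ invariantFunctions (τ⁻¹ * finRotate n)) = 1 := by
  have hone : (1 : Fin n → ℚ) ≠ 0 := fun h ↦ one_ne_zero (congrFun h ⟨0, hn⟩)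
  have hspan : invariantFunctions τ ⊓ invariantFunctions (τ⁻¹ * finRotate n) =
      Submodule.span ℚ {1} := by
    ext f
    rw [Submodule.mem_inf, Submodule.mem_span_singleton]
    constructor
    · rintro ⟨hτ, hκ⟩
      have hf : f ∈ invariantFunctions (finRotate n) := mem_invariantFunctions.2 fun x ↦ by
        rw [← mem_invariantFunctions.1 hκ x, ← mem_invariantFunctions.1 hτ ((τ⁻¹ * finRotate n) x),
          ← Equiv.Perm.mul_apply τ, mul_inv_cancel_left]
      refine ⟨f ⟨0, hn⟩, funext fun x ↦ ?_⟩
      simp [eq_of_mem_invariantFunctions_finRotate hf x ⟨0, hn⟩]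
    · rintro ⟨r, rfl⟩
      exact ⟨mem_invariantFunctions.2 fun _ ↦ rfl, mem_invariantFunctions.2 fun _ ↦ rfl⟩
  rw [hspan, finrank_span_singleton hone]

/-- For every step `m ↦ τ m`, the closed arc from `τ m` up to `m` is a union of orbits of `τ`. -/
def ArcsInvariant (τ : Equiv.Perm (Fin n)) : Prop :=
  ∀ m x, (τ x : ℕ) ∈ cyclicIcc (τ m : ℕ) m ↔ (x : ℕ) ∈ cyclicIcc (τ m : ℕ) m

theorem arcIndicator_mem_invariantFunctions {c m : Fin n} :
    arcIndicator c m ∈ invariantFunctions τ ↔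
      ∀ x, (τ x : ℕ) ∈ cyclicIcc (c : ℕ) m ↔ (x : ℕ) ∈ cyclicIcc (c : ℕ) m := by
  classical
  refine mem_invariantFunctions.trans (forall_congr' fun x ↦ ?_)
  simp only [arcIndicator, Set.indicator_apply, Set.mem_ofPred_eq, Pi.one_apply]
  split_ifs <;> simp_all

theorem arcsInvariant_iff_numOrbits (hn : 0 < n) (τ : Equiv.Perm (Fin n)) :
    ArcsInvariant τ ↔ numOrbits τ + numOrbits (τ⁻¹ * finRotate n) = n + 1 := by
  set W := invariantFunctions τ ⊔ invariantFunctions (τ⁻¹ * finRotate n)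
  have hdim : Module.finrank ℚ W + 1 = numOrbits τ + numOrbits (τ⁻¹ * finRotate n) := by
    rw [← finrank_inf_invariantFunctions hn τ, Submodule.finrank_sup_add_finrank_inf_eq,
      finrank_invariantFunctions, finrank_invariantFunctions]
  have htop : W = ⊤ ↔ Module.finrank ℚ W = n := by
    rw [Submodule.eq_top_iff_finrank_eq, Module.finrank_fin_fun]
  have hspan : W = ⊤ ↔ ∀ m, Pi.single m 1 ∈ W := by
    rw [eq_top_iff, ← (Pi.basisFun ℚ (Fin n)).span_eq, Submodule.span_le, Set.range_subset_iff]
    simp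
  rw [← hdim, add_left_inj, ← htop, hspan]
  exact forall_congr' fun m ↦
    arcIndicator_mem_invariantFunctions.symm.trans (single_mem_sup_iff τ m).symm

end Genus

section Disc

variable {n : ℕ} {τ : Equiv.Perm (Fin n)}

theorem rotatesOn_finRotate : RotatesOn (finRotate n) Fin.val Set.univ where
  mapsTo _ _ := trivial
  injOn := Fin.val_injective.injOn
  mem_arc b _ s _ := by
    rw [val_finRotate, mem_cyclicIcc]
    split_ifs <;> omega

theorem discStandardRel_finRotate_iff :
    DiscStandardRel (finRotate n) τ ↔ ∀ a, RotatesOn τ Fin.val {b | τ.SameCycle a b} := by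
  have hrot (a : Fin n) := rotatesOn_iff_induced_eq (mapsTo_setOf_sameCycle τ a)
    rotatesOn_finRotate (Set.subset_univ _)
  constructor
  · exact fun h a ↦ (hrot a).2 (h _ ⟨a, rfl⟩)
  · rintro h _ ⟨a, rfl⟩
    exact (hrot a).1 (h a)

theorem forall_rotatesOn_sameCycle_iff :
    (∀ a, RotatesOn τ Fin.val {b | τ.SameCycle a b}) ↔
      ∀ m x, τ.SameCycle m x → (x : ℕ) ∈ cyclicIcc (τ m : ℕ) m :=
  ⟨fun h m x hmx ↦ (h m).mem_arc m .rfl x hmx, fun h a ↦ ⟨mapsTo_setOf_sameCycle τ a,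
    Fin.val_injective.injOn, fun m hm x hx ↦ h m x (hm.symm.trans hx)⟩⟩

theorem DiscNC.rotatesOn (h : DiscNC τ) (a : Fin n) :
    RotatesOn τ Fin.val {b | τ.SameCycle a b} :=
  discStandardRel_finRotate_iff.1 h.1 a

theorem orbitsNoCrossing_iff :
    OrbitsNoCrossing τ ↔ ∀ a b c d : Fin n, sbtw₄ (a : ℕ) b c d → τ.SameCycle a c →
      τ.SameCycle b d → τ.SameCycle a b := by
  constructor
  · intro h a b c d habcd hac hbd
    by_contra hab
    rcases sbtw₄_iff_lt.1 habcd with ⟨h₁, h₂, h₃⟩ | ⟨h₁, h₂, h₃⟩ | ⟨h₁, h₂, h₃⟩ | ⟨h₁, h₂, h₃⟩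
    · exact h ⟨a, b, c, d, h₁, h₂, h₃, hac, hbd, hab⟩
    · exact h ⟨b, c, d, a, h₁, h₂, h₃, hbd, hac.symm, fun hbc ↦ hab (hac.trans hbc.symm)⟩
    · exact h ⟨c, d, a, b, h₁, h₂, h₃, hac.symm, hbd.symm,
        fun hcd ↦ hab ((hac.trans hcd).trans hbd.symm)⟩
    · exact h ⟨d, a, b, c, h₁, h₂, h₃, hbd.symm, hac, fun hda ↦ hab (hbd.trans hda).symm⟩
  · rintro h ⟨a, b, c, d, hab, hbc, hcd, hac, hbd, hne⟩
    exact hne (h a b c d (sbtw₄_iff_lt.2 (.inl ⟨hab, hbc, hcd⟩)) hac hbd)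

theorem DiscNC.arcsInvariant (h : DiscNC τ) : ArcsInvariant τ := by
  intro m x
  by_cases hmx : τ.SameCycle m x
  · have harc (x : Fin n) := forall_rotatesOn_sameCycle_iff.1 h.rotatesOn m x
    exact iff_of_true (harc _ hmx.apply_right) (harc _ hmx)
  have hmem (u v : Fin n) (hxu : τ.SameCycle x u) (huv : τ.SameCycle u v)
      (hu : (u : ℕ) ∈ cyclicIcc (τ m : ℕ) m) : (v : ℕ) ∈ cyclicIcc (τ m : ℕ) m := by
    by_contra hv
    have hum : (u : ℕ) ≠ m := fun h ↦ hmx (Fin.ext h ▸ hxu.symm)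
    have huτm : (u : ℕ) ≠ τ m := fun h ↦ hmx (Fin.ext h ▸ hxu).of_apply_right.symm
    have hτmu := orbitsNoCrossing_iff.1 h.2 _ _ _ _ (sbtw₄_of_mem_cyclicIcc hu huτm hum hv)
      (.apply_left .rfl) huv
    exact hmx (hτmu.of_apply_left.trans hxu.symm)
  exact ⟨hmem _ _ (.apply_right .rfl) (.apply_left .rfl), hmem _ _ .rfl (.apply_right .rfl)⟩

theorem ArcsInvariant.discNC (h : ArcsInvariant τ) : DiscNC τ := by
  have harc {m a b : Fin n} (hab : τ.SameCycle a b) (ha : (a : ℕ) ∈ cyclicIcc (τ m : ℕ) m) :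
      (b : ℕ) ∈ cyclicIcc (τ m : ℕ) m :=
    mem_of_mapsTo_of_sameCycle (T := {v : Fin n | (v : ℕ) ∈ cyclicIcc (τ m : ℕ) m})
      (fun x hx ↦ (h m x).2 hx) ha hab
  refine ⟨discStandardRel_finRotate_iff.2 <| forall_rotatesOn_sameCycle_iff.2 fun m x hmx ↦
    harc hmx ?_, orbitsNoCrossing_iff.2 fun a b c d habcd hac hbd ↦ ?_⟩
  · rw [mem_cyclicIcc]
    omega
  by_contra hab
  rw [sbtw₄_iff_lt] at habcd
  obtain ⟨m, hcm, hm, hτm⟩ := exists_exit_of_sameCycle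
    (P := {v : Fin n | (v : ℕ) ∈ cyclicIcc (b : ℕ) d}) hac.symm
    (by simp only [Set.mem_ofPred_eq, mem_cyclicIcc]; omega)
    (by simp only [Set.mem_ofPred_eq, mem_cyclicIcc]; omega)
  have hmd : (m : ℕ) ≠ d := fun hmd ↦ hab ((hac.trans (Fin.ext hmd ▸ hcm)).trans hbd.symm)
  have hb := harc (m := m) hbd
  have hd := harc (m := m) hbd.symm
  simp only [Set.mem_ofPred_eq, mem_cyclicIcc] at hm hτm hb hd
  omega

theorem discNC_iff_arcsInvariant : DiscNC τ ↔ ArcsInvariant τ :=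
  ⟨DiscNC.arcsInvariant, ArcsInvariant.discNC⟩

end Disc

section Cycles

variable {p q : ℕ} {v x y : Fin (p + q)}

theorem mem_extSet : v ∈ extSet p q ↔ (v : ℕ) < p :=
  Iff.rfl

theorem mem_intSet : v ∈ intSet p q ↔ p ≤ (v : ℕ) :=
  Iff.rfl

theorem notMem_extSet : v ∉ extSet p q ↔ v ∈ intSet p q := by
  rw [mem_extSet, mem_intSet, not_lt]

theorem notMem_intSet : v ∉ intSet p q ↔ v ∈ extSet p q := by
  rw [mem_extSet, mem_intSet, not_le]

theorem mem_take_finRange : v ∈ (List.finRange (p + q)).take p ↔ v ∈ extSet p q := by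
  simp only [List.mem_take_iff_getElem, List.getElem_finRange, List.length_finRange]
  exact ⟨by rintro ⟨i, hi, rfl⟩; exact (lt_min_iff.1 hi).1, fun h ↦ ⟨v, lt_min h v.2, rfl⟩⟩

theorem mem_drop_finRange : v ∈ (List.finRange (p + q)).drop p ↔ v ∈ intSet p q := by
  simp only [List.mem_drop_iff_getElem, List.getElem_finRange, List.length_finRange]
  refine ⟨by rintro ⟨i, hi, rfl⟩; exact Nat.le_add_right p i, fun h ↦ ⟨v - p, ?_, ?_⟩⟩
  · have : p ≤ (v : ℕ) := h
    omega
  · exact Fin.ext (Nat.add_sub_of_le h)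

theorem rotatesOn_gammaExt : RotatesOn (gammaExt p q) Fin.val (extSet p q) :=
  rotatesOn_formPerm ((List.pairwise_lt_finRange (p + q)).sublist (List.take_sublist p _))
    fun _ ↦ mem_take_finRange

theorem rotatesOn_gammaInt : RotatesOn (gammaInt p q) Fin.val (intSet p q) :=
  rotatesOn_formPerm ((List.pairwise_lt_finRange (p + q)).sublist (List.drop_sublist p _))
    fun _ ↦ mem_drop_finRange

theorem gammaAnn_apply_of_mem_extSet (hv : v ∈ extSet p q) : gammaAnn p q v = gammaExt p q v := by
  rw [gammaAnn, Equiv.Perm.mul_apply, gammaInt, List.formPerm_apply_of_notMem]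
  exact fun h ↦ notMem_intSet.2 hv (mem_drop_finRange.1 h)

theorem gammaAnn_apply_of_mem_intSet (hv : v ∈ intSet p q) : gammaAnn p q v = gammaInt p q v := by
  rw [gammaAnn, Equiv.Perm.mul_apply, gammaExt, List.formPerm_apply_of_notMem]
  exact fun h ↦ notMem_extSet.2 (rotatesOn_gammaInt.mapsTo hv) (mem_take_finRange.1 h)

theorem val_gammaExt (hv : v ∈ extSet p q) :
    (gammaExt p q v : ℕ) = if (v : ℕ) + 1 = p then 0 else (v : ℕ) + 1 := by
  have hvp : (v : ℕ) < p := hv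
  have hγ : (gammaExt p q v : ℕ) < p := rotatesOn_gammaExt.mapsTo hv
  have harc (k : ℕ) (hk : k < p) := rotatesOn_gammaExt.mem_arc v hv ⟨k, by omega⟩ hk
  simp only [mem_cyclicIcc] at harc
  have h₀ := harc 0 (by omega)
  have h₁ := harc (v + 1)
  split_ifs <;> omega

theorem val_gammaInt (hv : v ∈ intSet p q) :
    (gammaInt p q v : ℕ) = if (v : ℕ) + 1 = p + q then p else (v : ℕ) + 1 := by
  have hpv : p ≤ (v : ℕ) := hv
  have hγ : p ≤ (gammaInt p q v : ℕ) := rotatesOn_gammaInt.mapsTo hv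
  have harc (k : ℕ) (hk : k < p + q) (hpk : p ≤ k) :=
    rotatesOn_gammaInt.mem_arc v hv ⟨k, hk⟩ hpk
  simp only [mem_cyclicIcc] at harc
  have hp := harc p (by omega) le_rfl
  have h₁ := harc (v + 1)
  split_ifs <;> omega

theorem val_gammaExt_pow (hx : x ∈ extSet p q) {k : ℕ} (hk : k < p) :
    ((gammaExt p q ^ k) x : ℕ) = if (x : ℕ) + k < p then (x : ℕ) + k else x + k - p := by
  have hxp : (x : ℕ) < p := hx
  induction k with
  | zero => simp [hxp]
  | succ k ih =>
    have ih := ih (by omega)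
    have hmem : (gammaExt p q ^ k) x ∈ extSet p q := by
      change ((gammaExt p q ^ k) x : ℕ) < p
      split_ifs at ih <;> omega
    rw [pow_succ', Equiv.Perm.mul_apply, val_gammaExt hmem]
    split_ifs at * <;> omega

theorem val_gammaInt_pow (hy : y ∈ intSet p q) {k : ℕ} (hk : k < q) :
    ((gammaInt p q ^ k) y : ℕ) =
      if (y : ℕ) + k < p + q then (y : ℕ) + k else y + k - q := by
  have hpy : p ≤ (y : ℕ) := hy
  induction k with
  | zero => simp
  | succ k ih =>
    have ih := ih (by omega)
    have hmem : (gammaInt p q ^ k) y ∈ intSet p q := by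
      change p ≤ ((gammaInt p q ^ k) y : ℕ)
      split_ifs at ih <;> omega
    rw [pow_succ', Equiv.Perm.mul_apply, val_gammaInt hmem]
    split_ifs at * <;> omega

theorem val_gammaAnn (v : Fin (p + q)) : (gammaAnn p q v : ℕ) =
    if (v : ℕ) + 1 = p then 0 else if (v : ℕ) + 1 = p + q then p else (v : ℕ) + 1 := by
  by_cases hv : v ∈ extSet p q
  · rw [gammaAnn_apply_of_mem_extSet hv, val_gammaExt hv]
    have := mem_extSet.1 hv
    split_ifs <;> omega
  · have hv := notMem_extSet.1 hv
    rw [gammaAnn_apply_of_mem_intSet hv, val_gammaInt hv]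
    have := mem_intSet.1 hv
    split_ifs <;> omega

theorem gammaAnn_mul_swap {e l : Fin (p + q)} (he : (e : ℕ) + 1 = p) (hl : (l : ℕ) + 1 = p + q) :
    gammaAnn p q * Equiv.swap e l = finRotate (p + q) := by
  ext v
  rw [Equiv.Perm.mul_apply, val_gammaAnn, val_finRotate, Equiv.swap_apply_def]
  split_ifs <;> omega

theorem numOrbits_inv_mul_finRotate {τ : Equiv.Perm (Fin (p + q))} {e l : Fin (p + q)}
    (he : (e : ℕ) + 1 = p) (hτe : (τ e : ℕ) = p) (hl : (l : ℕ) + 1 = p + q) :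
    numOrbits (τ⁻¹ * finRotate (p + q)) = numOrbits (τ⁻¹ * gammaAnn p q) + 1 := by
  have hγl : gammaAnn p q l = τ e := by
    ext
    rw [val_gammaAnn]
    split_ifs <;> omega
  have hκl : (τ⁻¹ * gammaAnn p q) l = e := by
    rw [Equiv.Perm.mul_apply, hγl, Equiv.Perm.inv_eq_iff_eq]
  have hel : e ≠ l := by
    rintro rfl
    omega
  rw [← gammaAnn_mul_swap he hl, ← mul_assoc, numOrbits_mul_swap hκl hel]

/-- The position of a point in the circular word
`x, γ_ext x, …, γ_ext ^ (p - 1) x, y, γ_int y, …, γ_int ^ (q - 1) y`, whose points other than `x`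
and `y` are those that `lamPerm p q x y` cycles through. -/
def lamPos (x y v : Fin (p + q)) : ℕ :=
  if (v : ℕ) < p then if x ≤ v then v - x else v + p - x
  else if y ≤ v then p + (v - y) else p + (v + q - y)

theorem lamPos_left (hx : x ∈ extSet p q) : lamPos x y x = 0 := by
  rw [lamPos, if_pos (mem_extSet.1 hx), if_pos le_rfl, Nat.sub_self]

theorem lamPos_right (hy : y ∈ intSet p q) : lamPos x y y = p := by
  rw [lamPos, if_neg (mem_intSet.1 hy).not_gt, if_pos le_rfl, Nat.sub_self, Nat.add_zero]

theorem lamPos_gammaExt_pow (hx : x ∈ extSet p q) {k : ℕ} (hk : k < p) :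
    lamPos x y ((gammaExt p q ^ k) x) = k := by
  have hxp : (x : ℕ) < p := hx
  simp only [lamPos, Fin.le_def, val_gammaExt_pow hx hk]
  split_ifs <;> omega

theorem lamPos_gammaInt_pow (hy : y ∈ intSet p q) {k : ℕ} (hk : k < q) :
    lamPos x y ((gammaInt p q ^ k) y) = p + k := by
  have hpy : p ≤ (y : ℕ) := hy
  simp only [lamPos, Fin.le_def, val_gammaInt_pow hy hk]
  split_ifs <;> omega

theorem lamPos_injective (hx : x ∈ extSet p q) (y : Fin (p + q)) :
    Function.Injective (lamPos x y) := by
  intro u v huv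
  have hxp : (x : ℕ) < p := hx
  simp only [lamPos, Fin.le_def] at huv
  ext
  split_ifs at huv <;> omega

theorem mem_lamList (hx : x ∈ extSet p q) (hy : y ∈ intSet p q) :
    v ∈ ((List.range (p - 1)).map fun k ↦ (gammaExt p q ^ (k + 1)) x) ++
      ((List.range (q - 1)).map fun k ↦ (gammaInt p q ^ (k + 1)) y) ↔ v ≠ x ∧ v ≠ y := by
  have hxp := mem_extSet.1 hx
  have hpy := mem_intSet.1 hy
  have hinj := lamPos_injective hx y
  have hlt : lamPos x y v < p + q := by
    simp only [lamPos, Fin.le_def]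
    split_ifs <;> omega
  have hx₀ : v ≠ x ↔ lamPos x y v ≠ 0 := by
    rw [← hinj.ne_iff, lamPos_left hx]
  have hy₀ : v ≠ y ↔ lamPos x y v ≠ p := by
    rw [← hinj.ne_iff, lamPos_right hy]
  have hγext (k : ℕ) (hk : k < p - 1) :
      (gammaExt p q ^ (k + 1)) x = v ↔ k + 1 = lamPos x y v := by
    rw [← hinj.eq_iff, lamPos_gammaExt_pow hx (by omega)]
  have hγint (k : ℕ) (hk : k < q - 1) :
      (gammaInt p q ^ (k + 1)) y = v ↔ p + (k + 1) = lamPos x y v := by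
    rw [← hinj.eq_iff, lamPos_gammaInt_pow hy (by omega)]
  simp only [List.mem_append, List.mem_map, List.mem_range, hx₀, hy₀]
  constructor
  · rintro (⟨k, hk, hkv⟩ | ⟨k, hk, hkv⟩)
    · have := (hγext k hk).1 hkv
      omega
    · have := (hγint k hk).1 hkv
      omega
  · rintro ⟨h₀, hp⟩
    rcases hp.lt_or_gt with hvp | hpv
    · exact .inl ⟨lamPos x y v - 1, by omega, (hγext _ (by omega)).2 (by omega)⟩
    · exact .inr ⟨lamPos x y v - p - 1, by omega, (hγint _ (by omega)).2 (by omega)⟩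

theorem rotatesOn_lamPerm (hx : x ∈ extSet p q) (hy : y ∈ intSet p q) :
    RotatesOn (lamPerm p q x y) (lamPos x y) {v | v ≠ x ∧ v ≠ y} := by
  refine rotatesOn_formPerm ?_ fun v ↦ mem_lamList hx hy
  rw [List.pairwise_append, List.pairwise_map, List.pairwise_map]
  simp only [List.forall_mem_map, List.mem_range]
  have hγext (k : ℕ) (hk : k < p - 1) : lamPos x y ((gammaExt p q ^ (k + 1)) x) = k + 1 :=
    lamPos_gammaExt_pow hx (by omega)
  have hγint (k : ℕ) (hk : k < q - 1) : lamPos x y ((gammaInt p q ^ (k + 1)) y) = p + (k + 1) :=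
    lamPos_gammaInt_pow hy (by omega)
  refine ⟨List.pairwise_lt_range.imp_of_mem ?_, List.pairwise_lt_range.imp_of_mem ?_, ?_⟩
  · intro j k hj hk hjk
    rw [hγext j (List.mem_range.1 hj), hγext k (List.mem_range.1 hk)]
    omega
  · intro j k hj hk hjk
    rw [hγint j (List.mem_range.1 hj), hγint k (List.mem_range.1 hk)]
    omega
  · intro j hj k hk
    rw [hγext j hj, hγint k hk]
    omega

end Cycles

section Chord

variable {p q : ℕ} {a b c d x y : Fin (p + q)}

theorem lamPos_lt_lamPos_iff (hx : x ∈ extSet p q) (hy : y ∈ intSet p q) (ha : a ≠ x)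
    (hb : b ≠ x) (hab : a ∈ Set.Ioo x y ↔ b ∈ Set.Ioo x y) :
    lamPos x y a < lamPos x y b ↔ (a : ℕ) < b := by
  have hxp := mem_extSet.1 hx
  have hpy := mem_intSet.1 hy
  simp only [Set.mem_Ioo, Fin.lt_def, ne_eq, Fin.ext_iff] at ha hb hab
  simp only [lamPos, Fin.le_def]
  split_ifs <;> omega

theorem mem_Ioo_iff_lamPos (hx : x ∈ extSet p q) (hy : y ∈ intSet p q) (ha : a ≠ x) :
    a ∈ Set.Ioo x y ↔ lamPos x y a < p - x ∨ 2 * p + q - y ≤ lamPos x y a := by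
  have hxp := mem_extSet.1 hx
  have hpy := mem_intSet.1 hy
  simp only [Set.mem_Ioo, Fin.lt_def, ne_eq, Fin.ext_iff] at ha ⊢
  simp only [lamPos, Fin.le_def]
  split_ifs <;> omega

theorem sbtw_lamPos_iff (hx : x ∈ extSet p q) (hy : y ∈ intSet p q) (ha : a ≠ x) (hb : b ≠ x)
    (hc : c ≠ x) (hab : a ∈ Set.Ioo x y ↔ b ∈ Set.Ioo x y)
    (hac : a ∈ Set.Ioo x y ↔ c ∈ Set.Ioo x y) :
    sbtw (lamPos x y a) (lamPos x y b) (lamPos x y c) ↔ sbtw (a : ℕ) b c := by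
  rw [sbtw_iff_lt, sbtw_iff_lt, lamPos_lt_lamPos_iff hx hy ha hb hab,
    lamPos_lt_lamPos_iff hx hy hb hc (hab.symm.trans hac),
    lamPos_lt_lamPos_iff hx hy hc ha hac.symm]

theorem sbtw₄_of_sbtw₄_lamPos (hx : x ∈ extSet p q) (hy : y ∈ intSet p q) (ha : a ≠ x)
    (hb : b ≠ x) (hc : c ≠ x) (hd : d ≠ x) (hac : a ∈ Set.Ioo x y ↔ c ∈ Set.Ioo x y)
    (hbd : b ∈ Set.Ioo x y ↔ d ∈ Set.Ioo x y)
    (h : sbtw₄ (lamPos x y a) (lamPos x y b) (lamPos x y c) (lamPos x y d)) :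
    sbtw₄ (a : ℕ) b c d := by
  by_cases hab : a ∈ Set.Ioo x y ↔ b ∈ Set.Ioo x y
  · exact ⟨(sbtw_lamPos_iff hx hy ha hb hc hab hac).1 h.1,
      (sbtw_lamPos_iff hx hy hc hd ha (hac.symm.trans (hab.trans hbd)) hac.symm).1 h.2⟩
  · exfalso
    rw [mem_Ioo_iff_lamPos hx hy ha, mem_Ioo_iff_lamPos hx hy hc] at hac
    rw [mem_Ioo_iff_lamPos hx hy hb, mem_Ioo_iff_lamPos hx hy hd] at hbd
    rw [mem_Ioo_iff_lamPos hx hy ha, mem_Ioo_iff_lamPos hx hy hb] at hab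
    rw [sbtw₄_iff_lt] at h
    omega

end Chord

section Crossings

variable {p q : ℕ} {τ : Equiv.Perm (Fin (p + q))} {a b c d x y : Fin (p + q)}

theorem mapsSwap2_iff_sameCycle (hne : [a, b, c, d].Pairwise (· ≠ ·)) :
    MapsSwap2 τ {a, b, c, d} a b c d ↔
      τ.SameCycle a c ∧ τ.SameCycle b d ∧ ¬ τ.SameCycle a b := by
  rw [mapsSwap2_iff, mapsSwap_iff (by simp), mapsSwap_iff (by simp)]
  simp only [Set.mem_insert_iff, Set.mem_singleton_iff, forall_eq_or_imp, forall_eq]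
  simp only [List.pairwise_cons, List.mem_cons, forall_eq_or_imp] at hne
  grind [Equiv.Perm.SameCycle.symm, Equiv.Perm.SameCycle.trans]

theorem ac1_iff : AC1 p q τ ↔ ∃ a b c d : Fin (p + q),
    ({a, b, c, d} ⊆ extSet p q ∨ {a, b, c, d} ⊆ intSet p q) ∧ sbtw₄ (a : ℕ) b c d ∧
      τ.SameCycle a c ∧ τ.SameCycle b d ∧ ¬ τ.SameCycle a b := by
  have hγext : RotatesOn (gammaAnn p q) Fin.val (extSet p q) :=
    rotatesOn_gammaExt.congr fun _ ↦ gammaAnn_apply_of_mem_extSet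
  have hγint : RotatesOn (gammaAnn p q) Fin.val (intSet p q) :=
    rotatesOn_gammaInt.congr fun _ ↦ gammaAnn_apply_of_mem_intSet
  constructor
  · rintro ⟨a, b, c, d, hne, hcyc, hswap⟩
    refine ⟨a, b, c, d, ?_⟩
    rw [← mapsSwap2_iff_sameCycle hne]
    by_cases ha : a ∈ extSet p q
    · have hsub := hγext.subset_of_mapsCyc4 ha hcyc
      exact ⟨.inl hsub, (hγext.mapsCyc4_iff (Set.inter_eq_left.2 hsub) hne).1 hcyc, hswap⟩
    · have hsub := hγint.subset_of_mapsCyc4 (notMem_extSet.1 ha) hcyc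
      exact ⟨.inr hsub, (hγint.mapsCyc4_iff (Set.inter_eq_left.2 hsub) hne).1 hcyc, hswap⟩
  · rintro ⟨a, b, c, d, hsub, hsbtw, hswap⟩
    have hne := pairwise_ne_of_sbtw₄ (pos := Fin.val) hsbtw
    refine ⟨a, b, c, d, hne, ?_, (mapsSwap2_iff_sameCycle hne).2 hswap⟩
    rcases hsub with hsub | hsub
    · exact (hγext.mapsCyc4_iff (Set.inter_eq_left.2 hsub) hne).2 hsbtw
    · exact (hγint.mapsCyc4_iff (Set.inter_eq_left.2 hsub) hne).2 hsbtw

theorem mapsSwap2_and_mapsSwap_iff_sameCycle (hne : [a, b, c, d, x, y].Pairwise (· ≠ ·)) :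
    MapsSwap2 τ {a, b, c, d, x, y} a b c d ∧ MapsSwap τ {a, b, c, d, x, y} x y ↔
      τ.SameCycle a c ∧ τ.SameCycle b d ∧ τ.SameCycle x y ∧
      ¬ τ.SameCycle a b ∧ ¬ τ.SameCycle a x ∧ ¬ τ.SameCycle b x := by
  rw [mapsSwap2_iff, mapsSwap_iff (by simp), mapsSwap_iff (by simp), mapsSwap_iff (by simp)]
  simp only [Set.mem_insert_iff, Set.mem_singleton_iff, forall_eq_or_imp, forall_eq]
  simp only [List.pairwise_cons, List.mem_cons, forall_eq_or_imp] at hne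
  grind [Equiv.Perm.SameCycle.symm, Equiv.Perm.SameCycle.trans]

theorem mapsCyc4_lamPerm_iff (hx : x ∈ extSet p q) (hy : y ∈ intSet p q)
    (hne : [a, b, c, d, x, y].Pairwise (· ≠ ·)) :
    MapsCyc4 (lamPerm p q x y) {a, b, c, d} a b c d ↔
      sbtw₄ (lamPos x y a) (lamPos x y b) (lamPos x y c) (lamPos x y d) := by
  refine (rotatesOn_lamPerm hx hy).mapsCyc4_iff (Set.inter_eq_left.2 ?_) (hne.sublist (by simp))
  simp only [Set.insert_subset_iff, Set.singleton_subset_iff, Set.mem_ofPred_eq]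
  simp only [List.pairwise_cons, List.mem_cons] at hne
  grind

theorem ac3_iff : AC3 p q τ ↔ ∃ a b c d x y : Fin (p + q), x ∈ extSet p q ∧ y ∈ intSet p q ∧
    sbtw₄ (lamPos x y a) (lamPos x y b) (lamPos x y c) (lamPos x y d) ∧
      τ.SameCycle a c ∧ τ.SameCycle b d ∧ τ.SameCycle x y ∧
      ¬ τ.SameCycle a b ∧ ¬ τ.SameCycle a x ∧ ¬ τ.SameCycle b x := by
  constructor
  · rintro ⟨a, b, c, d, x, y, hne, hx, hy, hcyc, hswap⟩
    exact ⟨a, b, c, d, x, y, hx, hy, (mapsCyc4_lamPerm_iff hx hy hne).1 hcyc,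
      (mapsSwap2_and_mapsSwap_iff_sameCycle hne).1 hswap⟩
  · rintro ⟨a, b, c, d, x, y, hx, hy, hsbtw, hswap⟩
    have hne : [a, b, c, d, x, y].Pairwise (· ≠ ·) := by
      have hne₄ := pairwise_ne_of_sbtw₄ hsbtw
      have hxy : x ≠ y := fun h ↦ notMem_extSet.2 hy (h ▸ hx)
      simp only [List.pairwise_cons, List.mem_cons] at hne₄ ⊢
      grind [Equiv.Perm.SameCycle.symm, Equiv.Perm.SameCycle.trans, Equiv.Perm.SameCycle.rfl]
    exact ⟨a, b, c, d, x, y, hne, hx, hy, (mapsCyc4_lamPerm_iff hx hy hne).2 hsbtw,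
      (mapsSwap2_and_mapsSwap_iff_sameCycle hne).2 hswap⟩

theorem mapsCyc3_lamPerm_iff (hx : x ∈ extSet p q) (hy : y ∈ intSet p q)
    (hne : [a, b, c, x, y].Pairwise (· ≠ ·)) :
    MapsCyc3 (lamPerm p q x y) {a, b, c} a b c ↔
      sbtw (lamPos x y a) (lamPos x y b) (lamPos x y c) := by
  simp only [List.pairwise_cons, List.mem_cons] at hne
  refine (rotatesOn_lamPerm hx hy).mapsCyc3_iff (Set.inter_eq_left.2 ?_)
    (by grind) (by grind) (by grind)
  simp only [Set.insert_subset_iff, Set.singleton_subset_iff, Set.mem_ofPred_eq]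
  grind

theorem mapsCyc3_insert_pair_iff {pos : Fin (p + q) → ℕ}
    (hτ : RotatesOn τ pos {v | τ.SameCycle a v}) (hab : τ.SameCycle a b) (hac : τ.SameCycle a c)
    (hax : ¬ τ.SameCycle a x) (hay : ¬ τ.SameCycle a y)
    (hne : [a, b, c, x, y].Pairwise (· ≠ ·)) :
    MapsCyc3 τ {a, b, c, x, y} a c b ↔ sbtw (pos a) (pos c) (pos b) := by
  simp only [List.pairwise_cons, List.mem_cons] at hne
  refine hτ.mapsCyc3_iff ?_ (by grind) (by grind) (by grind)
  ext v
  simp only [Set.mem_inter_iff, Set.mem_insert_iff, Set.mem_singleton_iff, Set.mem_ofPred_eq]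
  grind [Equiv.Perm.SameCycle.rfl]

theorem AC2.exists_sbtw (h : AC2 p q τ) (hτ : ∀ a, RotatesOn τ Fin.val {b | τ.SameCycle a b}) :
    ∃ a b c x y : Fin (p + q), x ∈ extSet p q ∧ y ∈ intSet p q ∧
      sbtw (lamPos x y a) (lamPos x y b) (lamPos x y c) ∧ sbtw (a : ℕ) c b ∧
      τ.SameCycle a b ∧ τ.SameCycle a c ∧ τ.SameCycle x y ∧ ¬ τ.SameCycle x a := by
  obtain ⟨a, b, c, x, y, hne, hx, hy, hlam, hcyc, hswap⟩ := h
  set S : Set (Fin (p + q)) := {a, b, c, x, y} with hS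
  have hac := (((hτ a).induced_eq_iff ⟨by simp [hS], .rfl⟩).1 hcyc.1).1
  have hab := (((hτ a).induced_eq_iff hac).1 hcyc.2.1).1
  obtain ⟨-, hxy, horbit⟩ := (mapsSwap_iff (by simp [hS])).1 hswap
  have hxa : ¬ τ.SameCycle x a := fun hxa ↦ by
    have := horbit a (by simp [hS]) hxa
    simp only [List.pairwise_cons, List.mem_cons] at hne
    grind
  exact ⟨a, b, c, x, y, hx, hy, (mapsCyc3_lamPerm_iff hx hy hne).1 hlam,
    (mapsCyc3_insert_pair_iff (hτ a) hab.2 hac.2 (fun hax ↦ hxa hax.symm)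
      (fun hay ↦ hxa (hxy.trans hay.symm)) hne).1 hcyc, hab.2, hac.2, hxy, hxa⟩

theorem AC2.of_apply (hx : x ∈ extSet p q) (hy : y ∈ intSet p q)
    (hlam : sbtw (lamPos x y a) (lamPos x y b) (lamPos x y (τ a)))
    (hab : τ.SameCycle a b) (hxy : τ.SameCycle x y) (hxa : ¬ τ.SameCycle x a) : AC2 p q τ := by
  obtain ⟨pos, hpos⟩ := exists_rotatesOn_sameCycle τ a
  have haτ : τ.SameCycle a (τ a) := .apply_right .rfl
  have hax : ¬ τ.SameCycle a x := fun hax ↦ hxa hax.symm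
  have hay : ¬ τ.SameCycle a y := fun hay ↦ hxa (hxy.trans hay.symm)
  have hne : [a, b, τ a, x, y].Pairwise (· ≠ ·) := by
    have hxy : x ≠ y := fun h ↦ notMem_extSet.2 hy (h ▸ hx)
    rw [sbtw_iff_lt] at hlam
    simp only [List.pairwise_cons, List.mem_cons]
    grind [Equiv.Perm.SameCycle.rfl]
  have hba : b ≠ a ∧ b ≠ τ a := by
    simp only [List.pairwise_cons, List.mem_cons] at hne
    grind
  have hsbtw : sbtw (pos a) (pos (τ a)) (pos b) := hpos.sbtw_apply .rfl hab hba.1 hba.2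
  exact ⟨a, b, τ a, x, y, hne, hx, hy, (mapsCyc3_lamPerm_iff hx hy hne).2 hlam,
    (mapsCyc3_insert_pair_iff hpos hab haτ hax hay hne).2 hsbtw,
    (mapsSwap_iff (by simp)).2 ⟨by simp, hxy, by
      grind [Equiv.Perm.SameCycle.symm, Equiv.Perm.SameCycle.trans]⟩⟩

end Crossings

section DiscToAnnular

theorem OrbitsNoCrossing.mem_Ioo_of_sameCycle {n : ℕ} {τ : Equiv.Perm (Fin n)} {x y u v : Fin n}
    (h : OrbitsNoCrossing τ) (hxy : τ.SameCycle x y) (huv : τ.SameCycle u v)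
    (hxu : ¬ τ.SameCycle x u) (hu : u ∈ Set.Ioo x y) : v ∈ Set.Ioo x y := by
  by_contra hv
  have hvx : (v : ℕ) ≠ x := fun hvx ↦ hxu (Fin.ext hvx ▸ huv.symm)
  have hvy : (v : ℕ) ≠ y := fun hvy ↦ hxu (hxy.trans (Fin.ext hvy ▸ huv.symm))
  refine hxu (orbitsNoCrossing_iff.1 h x u y v (sbtw₄_iff_lt.2 ?_) hxy huv)
  simp only [Set.mem_Ioo, Fin.lt_def] at hu hv
  omega

theorem OrbitsNoCrossing.mem_Ioo_iff {n : ℕ} {τ : Equiv.Perm (Fin n)} {x y u v : Fin n}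
    (h : OrbitsNoCrossing τ) (hxy : τ.SameCycle x y) (huv : τ.SameCycle u v)
    (hxu : ¬ τ.SameCycle x u) : u ∈ Set.Ioo x y ↔ v ∈ Set.Ioo x y :=
  ⟨h.mem_Ioo_of_sameCycle hxy huv hxu,
    h.mem_Ioo_of_sameCycle hxy huv.symm fun hxv ↦ hxu (hxv.trans huv.symm)⟩

variable {p q : ℕ} {τ : Equiv.Perm (Fin (p + q))}

theorem DiscNC.annStandard (h : DiscNC τ) : AnnStandard p q τ := by
  have harc := forall_rotatesOn_sameCycle_iff.1 h.rotatesOn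
  refine ⟨?_, ?_⟩
  · rintro _ ⟨a, rfl⟩
    exact ⟨fun b ↦ (h.rotatesOn a).induced_eq_induced rotatesOn_gammaExt Set.inter_subset_left
      Set.inter_subset_right, fun b ↦ (h.rotatesOn a).induced_eq_induced rotatesOn_gammaInt
      Set.inter_subset_left Set.inter_subset_right⟩
  rintro _ ⟨a, rfl⟩ ⟨u, hau, hu⟩ ⟨v, hav, hv⟩
  have huv := hau.symm.trans hav
  constructor
  · obtain ⟨m, hum, hm, hτm⟩ := exists_exit_of_sameCycle huv hu (notMem_extSet.2 hv)
    refine ⟨m, ⟨⟨hau.trans hum, hm⟩, notMem_extSet.1 hτm⟩, ?_⟩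
    rintro m' ⟨⟨ham', hm'⟩, hτm'⟩
    have hmm' := (hau.trans hum).symm.trans ham'
    have h₁ := harc m m' hmm'
    have h₂ := harc m' m hmm'.symm
    simp only [mem_extSet, mem_intSet, mem_cyclicIcc] at *
    omega
  · obtain ⟨m, hvm, hm, hτm⟩ := exists_exit_of_sameCycle huv.symm hv (notMem_intSet.2 hu)
    refine ⟨m, ⟨⟨hav.trans hvm, hm⟩, notMem_intSet.1 hτm⟩, ?_⟩
    rintro m' ⟨⟨ham', hm'⟩, hτm'⟩
    have hmm' := (hav.trans hvm).symm.trans ham'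
    have h₁ := harc m m' hmm'
    have h₂ := harc m' m hmm'.symm
    simp only [mem_extSet, mem_intSet, mem_cyclicIcc] at *
    omega

theorem OrbitsNoCrossing.not_ac1 (h : OrbitsNoCrossing τ) : ¬ AC1 p q τ := by
  rw [ac1_iff]
  rintro ⟨a, b, c, d, -, habcd, hac, hbd, hab⟩
  exact hab (orbitsNoCrossing_iff.1 h a b c d habcd hac hbd)

theorem DiscNC.not_ac2 (h : DiscNC τ) : ¬ AC2 p q τ := by
  intro hAC2
  obtain ⟨a, b, c, x, y, hx, hy, hlam, hacb, hab, hac, hxy, hxa⟩ := hAC2.exists_sbtw h.rotatesOn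
  have hne {v : Fin (p + q)} (hav : τ.SameCycle a v) : v ≠ x := by
    rintro rfl
    exact hxa hav.symm
  rw [sbtw_lamPos_iff hx hy (hne .rfl) (hne hab) (hne hac) (h.2.mem_Ioo_iff hxy hab hxa)
    (h.2.mem_Ioo_iff hxy hac hxa)] at hlam
  exact hlam.not_sbtw hacb.cyclic_left

theorem OrbitsNoCrossing.not_ac3 (h : OrbitsNoCrossing τ) : ¬ AC3 p q τ := by
  rw [ac3_iff]
  rintro ⟨a, b, c, d, x, y, hx, hy, hlam, hac, hbd, hxy, hab, hax, hbx⟩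
  have hne {u v : Fin (p + q)} (hux : ¬ τ.SameCycle u x) (huv : τ.SameCycle u v) : v ≠ x := by
    rintro rfl
    exact hux huv
  refine hab (orbitsNoCrossing_iff.1 h a b c d ?_ hac hbd)
  exact sbtw₄_of_sbtw₄_lamPos hx hy (hne hax .rfl) (hne hbx .rfl) (hne hax hac) (hne hbx hbd)
    (h.mem_Ioo_iff hxy hac fun hxa ↦ hax hxa.symm) (h.mem_Ioo_iff hxy hbd fun hxb ↦ hbx hxb.symm)
    hlam

theorem DiscNC.annNC (h : DiscNC τ) : AnnNC p q τ :=
  ⟨h.annStandard, h.2.not_ac1, h.not_ac2, h.2.not_ac3⟩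

end DiscToAnnular

section AnnularToDisc

variable {p q : ℕ} {τ : Equiv.Perm (Fin (p + q))} {a b c d e m x y : Fin (p + q)}

theorem AnnStandard.mem_cyclicIcc_of_mem_extSet (h : AnnStandard p q τ) (hm : m ∈ extSet p q)
    (hτm : τ m ∈ extSet p q) (hmx : τ.SameCycle m x) (hx : x ∈ extSet p q) :
    (x : ℕ) ∈ cyclicIcc (τ m : ℕ) m := by
  have hmm : m ∈ {v | τ.SameCycle m v} ∩ extSet p q := ⟨.rfl, hm⟩
  have hτmm : τ m ∈ {v | τ.SameCycle m v} ∩ extSet p q := ⟨.apply_right .rfl, hτm⟩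
  have hγ := ((h.1 _ ⟨m, rfl⟩).1 m hmm).symm
  rw [induced_of_apply_mem hτmm,
    rotatesOn_gammaExt.induced_eq_iff ⟨hmm, hm⟩] at hγ
  exact hγ.2 x ⟨⟨hmx, hx⟩, hx⟩

theorem AnnStandard.mem_cyclicIcc_of_mem_intSet (h : AnnStandard p q τ) (hm : m ∈ intSet p q)
    (hτm : τ m ∈ intSet p q) (hmx : τ.SameCycle m x) (hx : x ∈ intSet p q) :
    (x : ℕ) ∈ cyclicIcc (τ m : ℕ) m := by
  have hmm : m ∈ {v | τ.SameCycle m v} ∩ intSet p q := ⟨.rfl, hm⟩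
  have hτmm : τ m ∈ {v | τ.SameCycle m v} ∩ intSet p q := ⟨.apply_right .rfl, hτm⟩
  have hγ := ((h.1 _ ⟨m, rfl⟩).2 m hmm).symm
  rw [induced_of_apply_mem hτmm,
    rotatesOn_gammaInt.induced_eq_iff ⟨hmm, hm⟩] at hγ
  exact hγ.2 x ⟨⟨hmx, hx⟩, hx⟩

theorem AnnStandard.eq_of_mem_extSet (h : AnnStandard p q τ) (ha : a ∈ extSet p q)
    (hτa : τ a ∈ intSet p q) (hb : b ∈ extSet p q) (hτb : τ b ∈ intSet p q)
    (hab : τ.SameCycle a b) : a = b := by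
  have hconn := (h.2 _ ⟨a, rfl⟩ ⟨a, .rfl, ha⟩ ⟨τ a, .apply_right .rfl, hτa⟩).1
  exact hconn.unique ⟨⟨.rfl, ha⟩, hτa⟩ ⟨⟨hab, hb⟩, hτb⟩

theorem AnnStandard.eq_of_mem_intSet (h : AnnStandard p q τ) (ha : a ∈ intSet p q)
    (hτa : τ a ∈ extSet p q) (hb : b ∈ intSet p q) (hτb : τ b ∈ extSet p q)
    (hab : τ.SameCycle a b) : a = b := by
  have hconn := (h.2 _ ⟨a, rfl⟩ ⟨τ a, .apply_right .rfl, hτa⟩ ⟨a, .rfl, ha⟩).2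
  exact hconn.unique ⟨⟨.rfl, ha⟩, hτa⟩ ⟨⟨hab, hb⟩, hτb⟩

theorem AnnStandard.lt_apply_of_sameCycle (h : AnnStandard p q τ) (he : (e : ℕ) + 1 = p)
    (hτe : (τ e : ℕ) = p) (hem : τ.SameCycle e m) (hm : ¬ (m ∈ intSet p q ∧ τ m ∈ extSet p q)) :
    (m : ℕ) < τ m := by
  have he' : e ∈ extSet p q := mem_extSet.2 (by omega)
  have hτe' : τ e ∈ intSet p q := mem_intSet.2 (by omega)
  by_cases hmp : m ∈ extSet p q <;> by_cases hτmp : τ m ∈ extSet p q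
  · have harc := h.mem_cyclicIcc_of_mem_extSet hmp hτmp hem.symm he'
    have hne : m ≠ e := by
      rintro rfl
      exact notMem_extSet.2 hτe' hτmp
    simp only [mem_extSet, mem_cyclicIcc] at *
    omega
  · exact (mem_extSet.1 hmp).trans_le (mem_intSet.1 (notMem_extSet.1 hτmp))
  · exact absurd ⟨notMem_extSet.1 hmp, hτmp⟩ hm
  · rw [notMem_extSet] at hmp hτmp
    have harc := h.mem_cyclicIcc_of_mem_intSet hmp hτmp (.apply_right hem.symm) hτe'
    have hne : (τ m : ℕ) ≠ τ e := by
      intro heq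
      rw [τ.injective (Fin.ext heq)] at hmp
      exact notMem_intSet.2 he' hmp
    simp only [mem_intSet, mem_cyclicIcc] at *
    omega

theorem AnnStandard.mem_cyclicIcc_of_sameCycle (h : AnnStandard p q τ) (he : (e : ℕ) + 1 = p)
    (hτe : (τ e : ℕ) = p) (hem : τ.SameCycle e m) (hmx : τ.SameCycle m x) :
    (x : ℕ) ∈ cyclicIcc (τ m : ℕ) m := by
  have he' : e ∈ extSet p q := mem_extSet.2 (by omega)
  have hτe' : τ e ∈ intSet p q := mem_intSet.2 (by omega)
  by_cases hm : m ∈ intSet p q ∧ τ m ∈ extSet p q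
  · have hlt {v : Fin (p + q)} (hev : τ.SameCycle e v) (hvm : v ≠ m) : (v : ℕ) < τ v :=
      h.lt_apply_of_sameCycle he hτe hev fun hv ↦
        hvm (h.eq_of_mem_intSet hv.1 hv.2 hm.1 hm.2 (hev.symm.trans hem))
    have hτm_le : Set.MapsTo τ {v | τ.SameCycle e v ∧ τ m ≤ v} {v | τ.SameCycle e v ∧ τ m ≤ v} := by
      rintro v ⟨hev, hv⟩
      refine ⟨.apply_right hev, ?_⟩
      rcases eq_or_ne v m with rfl | hvm
      · exact le_rfl
      · exact hv.trans (hlt hev hvm).le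
    have hm_lt : Set.MapsTo τ {v | τ.SameCycle e v ∧ m < v} {v | τ.SameCycle e v ∧ m < v} :=
      fun v ⟨hev, hv⟩ ↦ ⟨.apply_right hev, hv.trans (hlt hev hv.ne')⟩
    have hτmx : τ m ≤ x :=
      (mem_of_mapsTo_of_sameCycle hτm_le ⟨.apply_right hem, le_rfl⟩ (.apply_left hmx)).2
    have hxm : x ≤ m := not_lt.1 fun hmx' ↦
      (mem_of_mapsTo_of_sameCycle hm_lt ⟨hem.trans hmx, hmx'⟩ hmx.symm).2.false
    exact mem_cyclicIcc.2 (.inl ⟨hτmx, hxm⟩)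
  · have hlt := h.lt_apply_of_sameCycle he hτe hem hm
    by_cases hmp : m ∈ extSet p q <;> by_cases hτmp : τ m ∈ extSet p q
    · by_cases hx : x ∈ extSet p q
      · exact h.mem_cyclicIcc_of_mem_extSet hmp hτmp hmx hx
      · simp only [mem_extSet, mem_cyclicIcc] at *
        omega
    · rw [h.eq_of_mem_extSet hmp (notMem_extSet.1 hτmp) he' hτe' hem.symm, mem_cyclicIcc]
      omega
    · exact absurd ⟨notMem_extSet.1 hmp, hτmp⟩ hm
    · rw [notMem_extSet] at hmp hτmp
      by_cases hx : x ∈ intSet p q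
      · exact h.mem_cyclicIcc_of_mem_intSet hmp hτmp hmx hx
      · simp only [mem_intSet, mem_cyclicIcc] at *
        omega

theorem sbtw_lamPos_apply_iff (he : (e : ℕ) + 1 = p) (hτe : (τ e : ℕ) = p) (ha : a ≠ e)
    (hb : b ≠ e) (hc : c ≠ e) :
    sbtw (lamPos e (τ e) a) (lamPos e (τ e) b) (lamPos e (τ e) c) ↔ sbtw (a : ℕ) b c := by
  have hIoo {v : Fin (p + q)} : v ∉ Set.Ioo e (τ e) := by
    simp only [Set.mem_Ioo, Fin.lt_def]
    omega
  exact sbtw_lamPos_iff (mem_extSet.2 (by omega)) (mem_intSet.2 (by omega)) ha hb hc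
    (iff_of_false hIoo hIoo) (iff_of_false hIoo hIoo)

theorem mem_cyclicIcc_of_not_ac2 (hAC2 : ¬ AC2 p q τ) (he : (e : ℕ) + 1 = p)
    (hτe : (τ e : ℕ) = p) (hem : ¬ τ.SameCycle e m) (hmx : τ.SameCycle m x) :
    (x : ℕ) ∈ cyclicIcc (τ m : ℕ) m := by
  by_contra hx
  have hne {v : Fin (p + q)} (hmv : τ.SameCycle m v) : v ≠ e := by
    rintro rfl
    exact hem hmv.symm
  have hτm : (τ m : ℕ) ≠ m := by
    intro hτm
    rw [← hmx.eq_of_left (Fin.ext hτm), mem_cyclicIcc] at hx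
    omega
  have hsbtw : sbtw (m : ℕ) x (τ m) := by
    rw [mem_cyclicIcc] at hx
    rw [sbtw_iff_lt]
    omega
  rw [← sbtw_lamPos_apply_iff he hτe (hne .rfl) (hne hmx) (hne (.apply_right .rfl))] at hsbtw
  exact hAC2 (.of_apply (mem_extSet.2 (by omega)) (mem_intSet.2 (by omega)) hsbtw hmx
    (.apply_right .rfl) hem)

theorem sameCycle_of_sbtw₄_of_not_ac3 (hAC3 : ¬ AC3 p q τ) (he : (e : ℕ) + 1 = p)
    (hτe : (τ e : ℕ) = p) (h : sbtw₄ (a : ℕ) b c d) (hac : τ.SameCycle a c)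
    (hbd : τ.SameCycle b d) (hea : ¬ τ.SameCycle e a) (heb : ¬ τ.SameCycle e b) :
    τ.SameCycle a b := by
  by_contra hab
  have hne {u v : Fin (p + q)} (heu : ¬ τ.SameCycle e u) (huv : τ.SameCycle u v) : v ≠ e := by
    rintro rfl
    exact heu huv.symm
  have ha := hne hea .rfl
  have hc := hne hea hac
  exact hAC3 (ac3_iff.2 ⟨a, b, c, d, e, τ e, mem_extSet.2 (by omega), mem_intSet.2 (by omega),
    ⟨(sbtw_lamPos_apply_iff he hτe ha (hne heb .rfl) hc).2 h.1,
      (sbtw_lamPos_apply_iff he hτe hc (hne heb hbd) ha).2 h.2⟩,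
    hac, hbd, .apply_right .rfl, hab, fun h ↦ hea h.symm, fun h ↦ heb h.symm⟩)

theorem mem_Ioo_of_not_ac2 (hAC2 : ¬ AC2 p q τ) (he : (e : ℕ) + 1 = p) (hτe : (τ e : ℕ) = p)
    (hx : x ∈ extSet p q) (hy : y ∈ intSet p q) (hxy : τ.SameCycle x y)
    (hex : ¬ τ.SameCycle e x) (hea : τ.SameCycle e a) : a ∈ Set.Ioo x y := by
  by_contra ha
  have hxe : ¬ τ.SameCycle x e := fun hxe ↦ hex hxe.symm
  have hax : a ≠ x := by
    rintro rfl
    exact hex hea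
  have hyτe : (y : ℕ) ≠ τ e := fun heq ↦
    hxe (hxy.trans (Fin.ext heq ▸ .apply_left .rfl))
  refine hAC2 (.of_apply hx hy ?_ hea hxy hxe)
  rw [mem_Ioo_iff_lamPos hx hy hax] at ha
  rw [mem_extSet] at hx
  rw [mem_intSet] at hy
  have hpos_e : lamPos x y e = p - 1 - x := by
    simp only [lamPos, Fin.le_def]
    split_ifs <;> omega
  have hpos_τe : lamPos x y (τ e) = 2 * p + q - y := by
    simp only [lamPos, Fin.le_def]
    split_ifs <;> omega
  rw [sbtw_iff_lt, hpos_e, hpos_τe]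
  omega

theorem AC1.of_lt (he : (e : ℕ) + 1 = p) (hτe : (τ e : ℕ) = p) (hbc : b < c) (hcd : c < d)
    (hec : τ.SameCycle e c) (heb : ¬ τ.SameCycle e b) (hbd : τ.SameCycle b d)
    (hside : d ∈ extSet p q ∨ b ∈ intSet p q) : AC1 p q τ := by
  have hbc' : ¬ τ.SameCycle b c := fun h ↦ heb (hec.trans h.symm)
  rw [ac1_iff]
  rcases hside with hd | hb
  · have hde : (d : ℕ) ≠ e := fun hde ↦ heb (Fin.ext hde ▸ hbd.symm)
    rw [mem_extSet] at hd
    refine ⟨b, c, d, e, .inl ?_, sbtw₄_iff_lt.2 (by omega), hbd, hec.symm, hbc'⟩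
    simp only [Set.insert_subset_iff, Set.singleton_subset_iff, mem_extSet]
    omega
  · have hbτe : (b : ℕ) ≠ τ e := fun hbτe ↦ heb (Fin.ext hbτe ▸ .apply_right .rfl)
    rw [mem_intSet] at hb
    refine ⟨τ e, b, c, d, .inr ?_, sbtw₄_iff_lt.2 (by omega), .apply_left hec, hbd,
      fun h ↦ heb (.of_apply_left h)⟩
    simp only [Set.insert_subset_iff, Set.singleton_subset_iff, mem_intSet]
    omega

theorem AnnNC.sameCycle_of_sbtw₄ (h : AnnNC p q τ) (he : (e : ℕ) + 1 = p) (hτe : (τ e : ℕ) = p)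
    (habcd : sbtw₄ (a : ℕ) b c d) (hea : τ.SameCycle e a) (hac : τ.SameCycle a c)
    (hbd : τ.SameCycle b d) : τ.SameCycle a b := by
  obtain ⟨-, hAC1, hAC2, -⟩ := h
  by_contra hab
  have hec := hea.trans hac
  have heb : ¬ τ.SameCycle e b := fun heb ↦ hab (hea.symm.trans heb)
  have hed : ¬ τ.SameCycle e d := fun hed ↦ heb (hed.trans hbd.symm)
  rw [sbtw₄_iff_lt] at habcd
  rcases lt_or_gt_of_ne (show (b : ℕ) ≠ d by omega) with hlt | hlt
  · by_cases hside : d ∈ extSet p q ∨ b ∈ intSet p q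
    · exact hAC1 (.of_lt he hτe (by omega) (by omega) hec heb hbd hside)
    · rw [not_or, notMem_extSet, notMem_intSet] at hside
      have ha := mem_Ioo_of_not_ac2 hAC2 he hτe hside.2 hside.1 hbd heb hea
      simp only [Set.mem_Ioo, Fin.lt_def] at ha
      omega
  · by_cases hside : b ∈ extSet p q ∨ d ∈ intSet p q
    · exact hAC1 (.of_lt he hτe (by omega) (by omega) hea hed hbd.symm hside)
    · rw [not_or, notMem_extSet, notMem_intSet] at hside
      have hc := mem_Ioo_of_not_ac2 hAC2 he hτe hside.2 hside.1 hbd.symm hed hec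
      simp only [Set.mem_Ioo, Fin.lt_def] at hc
      omega

theorem AnnNC.discNC (h : AnnNC p q τ) (he : (e : ℕ) + 1 = p) (hτe : (τ e : ℕ) = p) :
    DiscNC τ := by
  refine ⟨discStandardRel_finRotate_iff.2 (forall_rotatesOn_sameCycle_iff.2 fun m x hmx ↦ ?_),
    orbitsNoCrossing_iff.2 fun a b c d habcd hac hbd ↦ ?_⟩
  · by_cases hem : τ.SameCycle e m
    · exact h.1.mem_cyclicIcc_of_sameCycle he hτe hem hmx
    · exact mem_cyclicIcc_of_not_ac2 h.2.2.1 he hτe hem hmx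
  · by_cases hea : τ.SameCycle e a
    · exact h.sameCycle_of_sbtw₄ he hτe habcd hea hac hbd
    by_cases heb : τ.SameCycle e b
    · have hbcda : sbtw₄ (b : ℕ) c d a := by
        rw [sbtw₄_iff_lt] at habcd ⊢
        omega
      exact hac.trans (h.sameCycle_of_sbtw₄ he hτe hbcda heb hbd hac.symm).symm
    · exact sameCycle_of_sbtw₄_of_not_ac3 h.2.2.2 he hτe habcd hac hbd hea heb

theorem annNC_iff_discNC (he : (e : ℕ) + 1 = p) (hτe : (τ e : ℕ) = p) :
    AnnNC p q τ ↔ DiscNC τ :=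
  ⟨fun h ↦ h.discNC he hτe, DiscNC.annNC⟩

end AnnularToDisc

/-- Lemma 6.4: if `τ` is a permutation of `[p+q]` with `τ(p) = p+1` (in 0-indexed terms,
`τ(p-1) = p`), then `τ ∈ S_ann-nc(p,q)` iff `#(τ) + #(τ⁻¹γ) = p+q`. -/
theorem stmt_18 (p q : ℕ) (hp : 0 < p) (hq : 0 < q)
    (τ : Equiv.Perm (Fin (p + q))) (hτ : τ ⟨p - 1, by omega⟩ = ⟨p, by omega⟩) :
    AnnNC p q τ ↔ numOrbits τ + numOrbits (τ⁻¹ * gammaAnn p q) = p + q := by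
  have he : ((⟨p - 1, by omega⟩ : Fin (p + q)) : ℕ) + 1 = p := Nat.sub_add_cancel hp
  have hτe : (τ ⟨p - 1, by omega⟩ : ℕ) = p := congrArg Fin.val hτ
  have hl : ((⟨p + q - 1, by omega⟩ : Fin (p + q)) : ℕ) + 1 = p + q :=
    Nat.sub_add_cancel (by omega)
  calc AnnNC p q τ
    _ ↔ DiscNC τ := annNC_iff_discNC he hτe
    _ ↔ ArcsInvariant τ := discNC_iff_arcsInvariant
    _ ↔ numOrbits τ + numOrbits (τ⁻¹ * finRotate (p + q)) = p + q + 1 :=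
      arcsInvariant_iff_numOrbits (by omega) τ
    _ ↔ numOrbits τ + numOrbits (τ⁻¹ * gammaAnn p q) = p + q := by
      rw [numOrbits_inv_mul_finRotate he hτe hl, ← Nat.add_assoc, Nat.add_right_cancel_iff]
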